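/- arXiv:2110.10663 — 4 statements merged into one kernel-verified Lean document; each statement's English description precedes it below -/
import Mathlib

section
/- Let 𝒯 be a triangulated category and let ℐ_1, …, ℐ_m be thick full triangulated subcategories such that (i) for any j > i, Hom(K, L) = 0 for all K ∈ ℐ_j and L ∈ ℐ_i, and (ii) ⟨ℐ_1 ∪ ⋯ ∪ ℐ_m⟩_∞ = 𝒯. Then rdim 𝒯 ≤ Σ_{l=1}^m (rdim ℐ_l + 1) − 1. -/
open CategoryTheory Category Limits Pretriangulated

universe v u

namespace RouquierDim

variable {C : Type u} [Category.{v} C] [Preadditive C] [HasZeroObject C]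
  [HasShift C ℤ] [∀ n : ℤ, (shiftFunctor C n).Additive] [Pretriangulated C]
  [HasBinaryBiproducts C]

/-- `Z` is a summand of `K`: there are maps `r : Z ⟶ K`, `k : K ⟶ Z` with `r ≫ k = 𝟙 Z`. -/
def IsSummand (Z K : C) : Prop := ∃ (r : Z ⟶ K) (k : K ⟶ Z), r ≫ k = 𝟙 Z

/-- The subcategory `ℐ * 𝒥`: objects `K` admitting a distinguished triangle
`K₀ ⟶ K ⟶ K₁ ⟶ K₀⟦1⟧` with `K₀ ∈ ℐ` and `K₁ ∈ 𝒥`. -/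
def star (I J : Set C) : Set C :=
  {K | ∃ (K₀ K₁ : C) (f : K₀ ⟶ K) (g : K ⟶ K₁) (h : K₁ ⟶ K₀⟦(1 : ℤ)⟧),
    Triangle.mk f g h ∈ (distTriang C) ∧ K₀ ∈ I ∧ K₁ ∈ J}

/-- Membership in `[ℐ]`, the smallest strictly full subcategory containing `ℐ` and
closed under finite direct sums and shifts. -/
inductive bracketMem (I : Set C) : C → Prop
  | of {X : C} (hX : X ∈ I) : bracketMem I X
  | zero {X : C} (hX : IsZero X) : bracketMem I X
  | shift {X : C} (n : ℤ) (hX : bracketMem I X) : bracketMem I (X⟦n⟧)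
  | sum {X Y : C} (hX : bracketMem I X) (hY : bracketMem I Y) : bracketMem I (X ⊞ Y)
  | iso {X Y : C} (e : X ≅ Y) (hX : bracketMem I X) : bracketMem I Y

/-- `[ℐ]` as a set of objects. -/
def bracket (I : Set C) : Set C := {X | bracketMem I X}

/-- Membership in `⟨ℐ⟩`, the smallest strictly full subcategory containing `ℐ` and
closed under finite direct sums, shifts, and summands. -/
inductive angleMem (I : Set C) : C → Prop
  | of {X : C} (hX : X ∈ I) : angleMem I X
  | zero {X : C} (hX : IsZero X) : angleMem I X
  | shift {X : C} (n : ℤ) (hX : angleMem I X) : angleMem I (X⟦n⟧)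
  | sum {X Y : C} (hX : angleMem I X) (hY : angleMem I Y) : angleMem I (X ⊞ Y)
  | smd {X Y : C} (h : IsSummand X Y) (hY : angleMem I Y) : angleMem I X
  | iso {X Y : C} (e : X ≅ Y) (hX : angleMem I X) : angleMem I Y

/-- `⟨ℐ⟩` as a set of objects. -/
def angle (I : Set C) : Set C := {X | angleMem I X}

/-- `ℐ_sd`: the smallest strictly full subcategory containing all summands of objects of `ℐ`. -/
def sd (I : Set C) : Set C := {Z | ∃ K ∈ I, IsSummand Z K}

/-- `[ℐ]_n` for `n ≥ 1`: `[ℐ]_1 = [ℐ]`, `[ℐ]_{n+1} = [ℐ]_n * [ℐ]`. (Value `∅` at `n = 0`.) -/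
def bracketN (I : Set C) : ℕ → Set C
  | 0 => ∅
  | 1 => bracket I
  | (n + 2) => star (bracketN I (n + 1)) (bracket I)

/-- `⟨ℐ⟩_n` for `n ≥ 1`: `⟨ℐ⟩_1 = ⟨ℐ⟩`, `⟨ℐ⟩_{n+1} = ⟨⟨ℐ⟩_n * ⟨ℐ⟩⟩`. (Value `∅` at `n = 0`.) -/
def angleN (I : Set C) : ℕ → Set C
  | 0 => ∅
  | 1 => angle I
  | (n + 2) => angle (star (angleN I (n + 1)) (angle I))

/-- `⟨ℐ⟩_∞ = ⋃_{n ∈ ℕ} ⟨ℐ⟩_n`. -/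
def angleInf (I : Set C) : Set C := ⋃ n : ℕ, angleN I n

/-- A thick full triangulated subcategory: a strictly full subcategory containing the zero
objects, closed under shifts, extensions (hence cones), and summands. -/
structure IsThickTriangulatedSub (S : Set C) : Prop where
  zero : ∀ X : C, IsZero X → X ∈ S
  iso_closed : ∀ {X Y : C}, (X ≅ Y) → X ∈ S → Y ∈ S
  shift : ∀ (X : C) (n : ℤ), X ∈ S → X⟦n⟧ ∈ S
  ext₂ : ∀ (T : Triangle C), T ∈ (distTriang C) → T.obj₁ ∈ S → T.obj₃ ∈ S → T.obj₂ ∈ S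
  summand : ∀ {X Y : C}, IsSummand X Y → Y ∈ S → X ∈ S

/-- The Rouquier dimension of a (strictly full, thick, triangulated) subcategory `S`:
the smallest `n ∈ ℕ ∪ {∞}` such that `S = ⟨G⟩_{n+1}` for some object `G ∈ S`.
Taking `S = Set.univ` gives the Rouquier dimension of the ambient category. -/
noncomputable def relRouquierDim (S : Set C) : ℕ∞ :=
  sInf {c : ℕ∞ | ∃ n : ℕ, c = (n : ℕ∞) ∧ ∃ G ∈ S, S = angleN {G} (n + 1)}

/-
By semiorthogonality, `I_m * ⋯ * I_1` is a triangulated subcategory, so its summands form a thick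
one, which is everything by generation. If `I_l = ⟨G_l⟩_{n_l + 1}`, then `I_l` is built from the
summands of shifts of `⨁ G_l` in `n_l + 1` steps, and these numbers add up along the product
because `A * (P * Q) ⊆ (A * P) * Q` for `P` and `Q` right orthogonal to `A`.

`Pretriangulated` does not include the octahedral axiom; the five lemma replaces it. Triangles with
first term in `A` and last term right orthogonal to `A` are characterised by bijections on Hom
groups, and these bijections pass to the third vertex of a triangle.
-/

section ZeroMorphisms

variable {𝒜 : Type*} [Category 𝒜] [HasZeroMorphisms 𝒜]

instance isStableUnderRetracts_rightOrthogonal (A : ObjectProperty 𝒜) :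
    A.rightOrthogonal.IsStableUnderRetracts where
  of_retract r hZ _ f hX := by
    rw [← comp_id f, ← r.retract, ← assoc, hZ (f ≫ r.i) hX, zero_comp]

instance isStableUnderRetracts_isZero :
    ObjectProperty.IsStableUnderRetracts (IsZero : ObjectProperty 𝒜) where
  of_retract r hZ := by
    rw [IsZero.iff_id_eq_zero, ← r.retract, hZ.eq_zero_of_tgt r.i, zero_comp]

end ZeroMorphisms

section Adjunction

variable {𝒜 ℬ : Type*} [Category 𝒜] [Category ℬ] {F : 𝒜 ⥤ ℬ} {G : ℬ ⥤ 𝒜}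
  {P : ObjectProperty 𝒜} {Q : ObjectProperty ℬ}

lemma isColocal_map_of_adjunction (adj : F ⊣ G) (hPQ : P ≤ Q.inverseImage F)
    {X Y : ℬ} {f : X ⟶ Y} (hf : Q.isColocal f) : P.isColocal (G.map f) := by
  intro Z hZ
  have hcomp : (fun g : Z ⟶ G.obj X ↦ g ≫ G.map f) =
      adj.homEquiv Z Y ∘ (fun g ↦ g ≫ f) ∘ (adj.homEquiv Z X).symm := by
    funext g
    simp [adj.homEquiv_naturality_right]
  rw [hcomp]
  exact (adj.homEquiv Z Y).bijective.comp
    ((hf _ (hPQ Z hZ)).comp (adj.homEquiv Z X).symm.bijective)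

lemma isLocal_map_of_adjunction (adj : F ⊣ G) (hQP : Q ≤ P.inverseImage G)
    {X Y : 𝒜} {f : X ⟶ Y} (hf : P.isLocal f) : Q.isLocal (F.map f) := by
  intro Z hZ
  have hcomp : (fun g : F.obj Y ⟶ Z ↦ F.map f ≫ g) =
      (adj.homEquiv X Z).symm ∘ (fun g ↦ f ≫ g) ∘ adj.homEquiv Y Z := by
    funext g
    simp [adj.homEquiv_naturality_left_symm]
  rw [hcomp]
  exact (adj.homEquiv X Z).symm.bijective.comp
    ((hf _ (hQP Z hZ)).comp (adj.homEquiv Y Z).bijective)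

end Adjunction

section Shift

variable {𝒜 : Type*} [Category 𝒜] [HasShift 𝒜 ℤ] {Q : ObjectProperty 𝒜} [Q.IsStableUnderShift ℤ]
  {X Y : 𝒜} {f : X ⟶ Y}

lemma isColocal_shift (hf : Q.isColocal f) (n : ℤ) : Q.isColocal (f⟦n⟧') :=
  isColocal_map_of_adjunction (shiftEquiv 𝒜 n).symm.toAdjunction (Q.le_shift (-n)) hf

lemma isLocal_shift (hf : Q.isLocal f) (n : ℤ) : Q.isLocal (f⟦n⟧') :=
  isLocal_map_of_adjunction (shiftEquiv 𝒜 n).toAdjunction (Q.le_shift (-n)) hf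

end Shift

section Products

variable {𝒜 : Type*} [Category 𝒜] {J : Type*} [HasProductsOfShape J 𝒜] {P : ObjectProperty 𝒜}

lemma isClosedUnderLimitsOfShape_discrete_of_pi [P.IsClosedUnderIsomorphisms]
    (hP : ∀ X : J → 𝒜, (∀ j, P (X j)) → P (∏ᶜ X)) :
    P.IsClosedUnderLimitsOfShape (Discrete J) where
  limitsOfShape_le := by
    rintro X ⟨p⟩
    exact P.prop_of_iso ((productIsProduct _).conePointUniqueUpToIso
        ((IsLimit.postcomposeHomEquiv Discrete.natIsoFunctor _).2 p.isLimit))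
      (hP _ fun j ↦ p.prop_diag_obj ⟨j⟩)

instance isClosedUnderLimitsOfShape_discrete_retractClosure
    [P.IsClosedUnderLimitsOfShape (Discrete J)] :
    P.retractClosure.IsClosedUnderLimitsOfShape (Discrete J) :=
  isClosedUnderLimitsOfShape_discrete_of_pi fun X hX ↦ by
    choose Y hY r using hX
    exact ⟨_, P.prop_pi Y hY, ⟨Limits.Pi.map fun j ↦ (r j).some.i,
      Limits.Pi.map fun j ↦ (r j).some.r, by ext; simp⟩⟩

end Products

section BinaryBiproducts

variable {𝒜 : Type*} [Category 𝒜] [HasZeroMorphisms 𝒜] [HasBinaryBiproducts 𝒜]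
  {P : ObjectProperty 𝒜}

lemma prop_biprod [P.IsClosedUnderBinaryProducts] {X Y : 𝒜} (hX : P X) (hY : P Y) : P (X ⊞ Y) :=
  P.prop_of_isLimit_binaryFan (BinaryBiproduct.isLimit X Y) hX hY

lemma isClosedUnderBinaryProducts_of_biprod [P.IsClosedUnderIsomorphisms]
    (hP : ∀ X Y : 𝒜, P X → P Y → P (X ⊞ Y)) : P.IsClosedUnderBinaryProducts where
  limitsOfShape_le := by
    rintro X ⟨p⟩
    exact P.prop_of_iso ((BinaryBiproduct.isLimit _ _).conePointUniqueUpToIso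
        ((IsLimit.postcomposeHomEquiv (diagramIsoPair p.diag) _).2 p.isLimit))
      (hP _ _ (p.prop_diag_obj ⟨.left⟩) (p.prop_diag_obj ⟨.right⟩))

end BinaryBiproducts

section Sets

variable {𝒜 : Type*} [Category 𝒜] {S : Set 𝒜}

/-- The full subcategory with set of objects `S`, as an object property. -/
abbrev ofSet (S : Set 𝒜) : ObjectProperty 𝒜 := (· ∈ S)

lemma isStableUnderRetracts_ofSet (hS : ∀ {X Y : 𝒜}, IsSummand X Y → Y ∈ S → X ∈ S) :
    (ofSet S).IsStableUnderRetracts where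
  of_retract r := hS ⟨r.i, r.r, r.retract⟩

end Sets

section Angle

open ObjectProperty

variable {𝒜 : Type*} [Category 𝒜] [Preadditive 𝒜] [HasShift 𝒜 ℤ] [HasBinaryBiproducts 𝒜]

lemma ofSet_angle_le {I : Set 𝒜} {P : ObjectProperty 𝒜} [P.ContainsZero] [P.IsStableUnderShift ℤ]
    [P.IsClosedUnderBinaryProducts] [P.IsStableUnderRetracts] (hI : ofSet I ≤ P) :
    ofSet (angle I) ≤ P := by
  intro X hX
  induction hX with
  | of hX => exact hI _ hX
  | zero hX => exact P.prop_of_isZero hX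
  | shift n _ ih => exact P.le_shift n _ ih
  | sum _ _ ihX ihY => exact prop_biprod ihX ihY
  | smd h _ ih =>
    obtain ⟨r, k, hrk⟩ := h
    exact P.prop_of_retract ⟨r, k, hrk⟩ ih
  | iso e _ ih => exact P.prop_of_iso e ih

variable (I : Set 𝒜)

instance isStableUnderShift_ofSet_angle : (ofSet (angle I)).IsStableUnderShift ℤ where
  isStableUnderShiftBy n := ⟨fun _ ↦ .shift n⟩

instance isStableUnderRetracts_ofSet_angle : (ofSet (angle I)).IsStableUnderRetracts :=
  isStableUnderRetracts_ofSet .smd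

instance isClosedUnderBinaryProducts_ofSet_angle :
    (ofSet (angle I)).IsClosedUnderBinaryProducts :=
  isClosedUnderBinaryProducts_of_biprod fun _ _ ↦ .sum

variable [HasZeroObject 𝒜]

instance containsZero_ofSet_angle : (ofSet (angle I)).ContainsZero :=
  ⟨_, isZero_zero 𝒜, .zero (isZero_zero 𝒜)⟩

lemma ofSet_angle_singleton_le {X Y : 𝒜} (h : IsSummand X Y) :
    ofSet (angle {X}) ≤ ofSet (angle {Y}) :=
  ofSet_angle_le (by rintro _ rfl; exact .smd h (.of rfl))

lemma ofSet_angle_eq_retractClosure {I : Set 𝒜} {P : ObjectProperty 𝒜} [P.ContainsZero]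
    [P.IsStableUnderShift ℤ] [P.IsClosedUnderBinaryProducts] (hI : ofSet I = P) :
    ofSet (angle I) = P.retractClosure := by
  subst hI
  apply le_antisymm
  · exact ofSet_angle_le (le_retractClosure _)
  · rw [retractClosure_le_iff]
    exact fun _ ↦ .of

end Angle

section HomGroups

open Preadditive

variable {𝒜 : Type*} [Category 𝒜] [Preadditive 𝒜]

lemma rightComp_comp_rightComp_eq {X Y Z W : 𝒜} {f : X ⟶ Y} {g : Y ⟶ W} {f' : X ⟶ Z}
    {g' : Z ⟶ W} (h : f ≫ g = f' ≫ g') (K : 𝒜) :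
    (rightComp K g).comp (rightComp K f) = (rightComp K g').comp (rightComp K f') := by
  ext k
  simp [rightComp, h]

lemma leftComp_comp_leftComp_eq {X Y Z W : 𝒜} {f : X ⟶ Y} {g : Y ⟶ W} {f' : X ⟶ Z}
    {g' : Z ⟶ W} (h : f ≫ g = f' ≫ g') (K : 𝒜) :
    (leftComp K f).comp (leftComp K g) = (leftComp K f').comp (leftComp K g') := by
  ext k
  simp [leftComp, reassoc_of% h]

end HomGroups

section Pretriangulated

variable {𝒯 : Type u} [Category.{v} 𝒯] [Preadditive 𝒯] [HasZeroObject 𝒯] [HasShift 𝒯 ℤ]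
  [∀ n : ℤ, (shiftFunctor 𝒯 n).Additive] [Pretriangulated 𝒯]

section HomExact

open Preadditive

lemma exact_rightComp {T : Triangle 𝒯} (hT : T ∈ distTriang 𝒯) (X : 𝒯) :
    Function.Exact (rightComp X T.mor₁) (rightComp X T.mor₂) := by
  refine fun f ↦ ⟨fun hf ↦ ?_, ?_⟩
  · obtain ⟨g, rfl⟩ := T.coyoneda_exact₂ hT f hf
    exact ⟨g, rfl⟩
  · rintro ⟨g, rfl⟩
    simp [rightComp, comp_distTriang_mor_zero₁₂ T hT]

lemma exact_leftComp {T : Triangle 𝒯} (hT : T ∈ distTriang 𝒯) (X : 𝒯) :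
    Function.Exact (leftComp X T.mor₂) (leftComp X T.mor₁) := by
  refine fun f ↦ ⟨fun hf ↦ ?_, ?_⟩
  · obtain ⟨g, rfl⟩ := T.yoneda_exact₂ hT f hf
    exact ⟨g, rfl⟩
  · rintro ⟨g, rfl⟩
    simp [leftComp, ← assoc, comp_distTriang_mor_zero₁₂ T hT]

variable {Q : ObjectProperty 𝒯} [Q.IsStableUnderShift ℤ] {T T' : Triangle 𝒯}

lemma isColocal_hom₂ (hT : T ∈ distTriang 𝒯) (hT' : T' ∈ distTriang 𝒯) (φ : T ⟶ T')
    (h₁ : Q.isColocal φ.hom₁) (h₃ : Q.isColocal φ.hom₃) : Q.isColocal φ.hom₂ := by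
  intro X hX
  let φinv := (invRotate 𝒯).map φ
  let φrot := (rotate 𝒯).map φ
  have h₀ : Q.isColocal φinv.hom₁ := isColocal_shift h₃ (-1)
  have h₄ : Q.isColocal φrot.hom₃ := isColocal_shift h₁ 1
  exact AddMonoidHom.bijective_of_surjective_of_bijective_of_bijective_of_injective
    (hc₁ := rightComp_comp_rightComp_eq φinv.comm₁.symm X)
    (hc₂ := rightComp_comp_rightComp_eq φ.comm₁.symm X)
    (hc₃ := rightComp_comp_rightComp_eq φ.comm₂.symm X)
    (hc₄ := rightComp_comp_rightComp_eq φrot.comm₂.symm X)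
    (hf₁ := exact_rightComp (inv_rot_of_distTriang _ hT) X)
    (hf₂ := exact_rightComp hT X)
    (hf₃ := exact_rightComp (rot_of_distTriang _ hT) X)
    (hg₁ := exact_rightComp (inv_rot_of_distTriang _ hT') X)
    (hg₂ := exact_rightComp hT' X)
    (hg₃ := exact_rightComp (rot_of_distTriang _ hT') X)
    (hi₁ := (h₀ X hX).surjective) (hi₂ := h₁ X hX) (hi₄ := h₃ X hX) (hi₅ := (h₄ X hX).injective)

lemma isLocal_hom₂ (hT : T ∈ distTriang 𝒯) (hT' : T' ∈ distTriang 𝒯) (φ : T ⟶ T')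
    (h₁ : Q.isLocal φ.hom₁) (h₃ : Q.isLocal φ.hom₃) : Q.isLocal φ.hom₂ := by
  intro X hX
  let φinv := (invRotate 𝒯).map φ
  let φrot := (rotate 𝒯).map φ
  have h₀ : Q.isLocal φinv.hom₁ := isLocal_shift h₃ (-1)
  have h₄ : Q.isLocal φrot.hom₃ := isLocal_shift h₁ 1
  exact AddMonoidHom.bijective_of_surjective_of_bijective_of_bijective_of_injective
    (hc₁ := leftComp_comp_leftComp_eq φrot.comm₂ X)
    (hc₂ := leftComp_comp_leftComp_eq φ.comm₂ X)
    (hc₃ := leftComp_comp_leftComp_eq φ.comm₁ X)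
    (hc₄ := leftComp_comp_leftComp_eq φinv.comm₁ X)
    (hf₁ := exact_leftComp (rot_of_distTriang _ hT') X)
    (hf₂ := exact_leftComp hT' X)
    (hf₃ := exact_leftComp (inv_rot_of_distTriang _ hT') X)
    (hg₁ := exact_leftComp (rot_of_distTriang _ hT) X)
    (hg₂ := exact_leftComp hT X)
    (hg₃ := exact_leftComp (inv_rot_of_distTriang _ hT) X)
    (hi₁ := (h₄ X hX).surjective) (hi₂ := h₃ X hX) (hi₄ := h₁ X hX) (hi₅ := (h₀ X hX).injective)

lemma rightOrthogonal_obj₃_of_isColocal (hT : T ∈ distTriang 𝒯) (h : Q.isColocal T.mor₁) :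
    Q.rightOrthogonal T.obj₃ := by
  intro K k hK
  have hk : k ≫ T.mor₃ = 0 := (isColocal_shift h 1 K hK).injective (by
    simp [comp_distTriang_mor_zero₃₁ T hT])
  obtain ⟨l, rfl⟩ := T.coyoneda_exact₃ hT k hk
  obtain ⟨l', rfl⟩ := (h K hK).surjective l
  simp [comp_distTriang_mor_zero₁₂ T hT]

end HomExact

section Truncation

/-- The sequence `X ⟶ Y ⟶ Z` truncates `Y` with respect to `A`: the first map is the universal map
to `Y` from an object of `A`, the second one the universal map from `Y` to an object of
`A.rightOrthogonal`. Both universal properties are phrased as bijections of Hom sets. -/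
structure IsTruncation (A : ObjectProperty 𝒯) {X Y Z : 𝒯} (f : X ⟶ Y) (g : Y ⟶ Z) : Prop where
  prop_left : A X
  prop_right : A.rightOrthogonal Z
  isColocal : A.isColocal f
  isLocal : A.rightOrthogonal.isLocal g

namespace IsTruncation

variable {A : ObjectProperty 𝒯} [A.IsTriangulated] {X Y Z : 𝒯} {f : X ⟶ Y} {g : Y ⟶ Z}

lemma of_distTriang {T : Triangle 𝒯} (hT : T ∈ distTriang 𝒯) (h₁ : A T.obj₁)
    (h₃ : A.rightOrthogonal T.obj₃) : IsTruncation A T.mor₁ T.mor₂ where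
  prop_left := h₁
  prop_right := h₃
  isColocal := by
    have hA : A ≤ A.rightOrthogonal.trW.isColocal := by
      rw [ObjectProperty.isColocal_trW]
      exact fun _ hX _ φ hY ↦ hY φ hX
    exact (ObjectProperty.le_isColocal_iff _ _).2 hA _ (ObjectProperty.trW.mk _ hT h₃)
  isLocal := (ObjectProperty.le_isLocal_iff _ _).2 (ObjectProperty.isLocal_trW A).ge _
    (ObjectProperty.trW.mk' _ hT h₁)

lemma shift (h : IsTruncation A f g) (n : ℤ) : IsTruncation A (f⟦n⟧') (g⟦n⟧') where
  prop_left := A.le_shift n _ h.prop_left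
  prop_right := A.rightOrthogonal.le_shift n _ h.prop_right
  isColocal := isColocal_shift h.isColocal n
  isLocal := isLocal_shift h.isLocal n

variable {T T' T'' : Triangle 𝒯} {φ : T ⟶ T'} {ψ : T' ⟶ T''}

lemma hom₂ [A.IsClosedUnderIsomorphisms] (hT : T ∈ distTriang 𝒯) (hT' : T' ∈ distTriang 𝒯)
    (hT'' : T'' ∈ distTriang 𝒯)
    (h₁ : IsTruncation A φ.hom₁ ψ.hom₁) (h₃ : IsTruncation A φ.hom₃ ψ.hom₃) :
    IsTruncation A φ.hom₂ ψ.hom₂ where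
  prop_left := A.ext_of_isTriangulatedClosed₂ T hT h₁.prop_left h₃.prop_left
  prop_right := A.rightOrthogonal.ext_of_isTriangulatedClosed₂ T'' hT'' h₁.prop_right h₃.prop_right
  isColocal := isColocal_hom₂ hT hT' φ h₁.isColocal h₃.isColocal
  isLocal := isLocal_hom₂ hT' hT'' ψ h₁.isLocal h₃.isLocal

lemma hom₁ [A.IsClosedUnderIsomorphisms] (hT : T ∈ distTriang 𝒯) (hT' : T' ∈ distTriang 𝒯)
    (hT'' : T'' ∈ distTriang 𝒯)
    (h₂ : IsTruncation A φ.hom₂ ψ.hom₂) (h₃ : IsTruncation A φ.hom₃ ψ.hom₃) :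
    IsTruncation A φ.hom₁ ψ.hom₁ :=
  hom₂ (φ := (invRotate 𝒯).map φ) (ψ := (invRotate 𝒯).map ψ) (inv_rot_of_distTriang _ hT)
    (inv_rot_of_distTriang _ hT') (inv_rot_of_distTriang _ hT'') (h₃.shift (-1)) h₂

lemma extensionProduct {B : ObjectProperty 𝒯} [B.IsClosedUnderIsomorphisms] (h : IsTruncation A f g)
    (hZ : B Z) : A.extensionProduct B Y := by
  obtain ⟨W, p, δ, hT⟩ := distinguished_cocone_triangle f
  have hf : IsTruncation A f p :=
    of_distTriang hT h.prop_left (rightOrthogonal_obj₃_of_isColocal hT h.isColocal)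
  obtain ⟨e, he⟩ := (h.isLocal _ hf.prop_right).2 p
  have : IsIso e := by
    rw [← A.rightOrthogonal.isLocal_iff_isIso e h.prop_right hf.prop_right]
    apply A.rightOrthogonal.isLocal.of_precomp g e h.isLocal
    convert hf.isLocal using 1
  exact ⟨_, _, _, _, _, hT, h.prop_left, B.prop_of_iso (asIso e) hZ⟩

end IsTruncation

end Truncation

section ExtensionProduct

open scoped ZeroObject

instance containsZero_extensionProduct (P Q : ObjectProperty 𝒯) [P.ContainsZero]
    [Q.ContainsZero] : (P.extensionProduct Q).ContainsZero where
  exists_zero :=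
    have ⟨Z, hZ, hPZ⟩ := P.exists_prop_of_containsZero
    ⟨Z, hZ, P.le_extensionProduct_left Q Z hPZ⟩

instance isClosedUnderLimitsOfShape_discrete_extensionProduct (P Q : ObjectProperty 𝒯)
    {J : Type*} [HasProductsOfShape J 𝒯] [P.IsClosedUnderLimitsOfShape (Discrete J)]
    [Q.IsClosedUnderLimitsOfShape (Discrete J)] :
    (P.extensionProduct Q).IsClosedUnderLimitsOfShape (Discrete J) :=
  isClosedUnderLimitsOfShape_discrete_of_pi fun X hX ↦ by
    choose Y Z f g h hT hY hZ using hX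
    exact ⟨_, _, _, _, _, productTriangle_distinguished (fun j ↦ Triangle.mk (f j) (g j) (h j)) hT,
      P.prop_pi Y hY, Q.prop_pi Z hZ⟩

lemma isZero_extensionProduct_le (P : ObjectProperty 𝒯) [P.IsClosedUnderIsomorphisms] :
    ObjectProperty.extensionProduct IsZero P ≤ P := by
  rintro X ⟨Y, Z, f, g, h, hT, hY, hZ⟩
  have : IsIso g := (Triangle.isZero₁_iff_isIso₂ _ hT).1 hY
  exact P.prop_of_iso (asIso g).symm hZ

variable {A B P Q : ObjectProperty 𝒯} [A.IsTriangulated] [A.IsClosedUnderIsomorphisms]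

lemma isTriangulatedClosed₂_extensionProduct [B.IsTriangulatedClosed₂]
    [B.IsClosedUnderIsomorphisms] (hB : B ≤ A.rightOrthogonal) :
    (A.extensionProduct B).IsTriangulatedClosed₂ := .mk' (by
  rintro T hT ⟨a₁, b₁, f₁, g₁, _, hT₁, ha₁, hb₁⟩ ⟨a₃, b₃, f₃, g₃, _, hT₃, ha₃, hb₃⟩
  have h₁ : IsTruncation A f₁ g₁ := .of_distTriang hT₁ ha₁ (hB _ hb₁)
  have h₃ : IsTruncation A f₃ g₃ := .of_distTriang hT₃ ha₃ (hB _ hb₃)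
  obtain ⟨α, hα : α ≫ f₁⟦1⟧' = f₃ ≫ T.mor₃⟩ :=
    ((h₁.shift 1).isColocal _ ha₃).surjective (f₃ ≫ T.mor₃)
  obtain ⟨β, hβ : g₃ ≫ β = T.mor₃ ≫ g₁⟦1⟧'⟩ :=
    (h₃.isLocal _ (h₁.shift 1).prop_right).surjective (T.mor₃ ≫ g₁⟦1⟧')
  obtain ⟨a₂, u, v, hTa⟩ := distinguished_cocone_triangle₂ α
  obtain ⟨b₂, s, t, hTb⟩ := distinguished_cocone_triangle₂ β
  obtain ⟨f₂, hf₁₂, hf₂₃⟩ := complete_distinguished_triangle_morphism₂ _ _ hTa hT f₁ f₃ hα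
  obtain ⟨g₂, hg₁₂, hg₂₃⟩ := complete_distinguished_triangle_morphism₂ _ _ hT hTb g₁ g₃ hβ.symm
  let φ : Triangle.mk u v α ⟶ T := Triangle.homMk _ _ f₁ f₂ f₃ hf₁₂ hf₂₃ hα
  let ψ : T ⟶ Triangle.mk s t β := Triangle.homMk _ _ g₁ g₂ g₃ hg₁₂ hg₂₃ hβ.symm
  have h₂ : IsTruncation A f₂ g₂ := .hom₂ (φ := φ) (ψ := ψ) hTa hT hTb h₁ h₃
  exact h₂.extensionProduct (B.ext_of_isTriangulatedClosed₂ _ hTb hb₁ hb₃))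

lemma isTriangulated_extensionProduct [B.IsTriangulated] [B.IsClosedUnderIsomorphisms]
    (hB : B ≤ A.rightOrthogonal) : (A.extensionProduct B).IsTriangulated where
  toIsTriangulatedClosed₂ := isTriangulatedClosed₂_extensionProduct hB

lemma extensionProduct_extensionProduct_le [P.IsClosedUnderIsomorphisms]
    (hP : P ≤ A.rightOrthogonal) (hQ : Q ≤ A.rightOrthogonal) :
    A.extensionProduct (P.extensionProduct Q) ≤ (A.extensionProduct P).extensionProduct Q := by
  rintro Y ⟨a, b, f, g, _, hT, ha, b₁, b₂, s, t, _, hTb, hb₁, hb₂⟩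
  have hb : A.rightOrthogonal b :=
    A.rightOrthogonal.ext_of_isTriangulatedClosed₂ _ hTb (hP _ hb₁) (hQ _ hb₂)
  have h₂ : IsTruncation A f g := .of_distTriang hT ha hb
  have h₃ : IsTruncation A (0 : 0 ⟶ b₂) (𝟙 b₂) :=
    .of_distTriang (contractible_distinguished₁ b₂) A.prop_zero (hQ _ hb₂)
  obtain ⟨V, i, _, hTV⟩ := distinguished_cocone_triangle₁ (g ≫ t)
  have hf₂ : (0 : a ⟶ 0) ≫ (0 : 0 ⟶ b₂) = f ≫ g ≫ t := by
    rw [zero_comp, ← assoc, show f ≫ g = 0 from comp_distTriang_mor_zero₁₂ _ hT, zero_comp]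
  obtain ⟨r, hr₁, hr₃⟩ := complete_distinguished_triangle_morphism₁ _ _
    (contractible_distinguished a) hTV f 0 hf₂
  obtain ⟨q, hq₁, hq₃⟩ := complete_distinguished_triangle_morphism₁ _ _ hTV hTb g (𝟙 b₂)
    (comp_id _)
  have h₁ : IsTruncation A r q :=
    .hom₁ (φ := Triangle.homMk _ _ r f 0 hr₁ hf₂ hr₃)
      (ψ := Triangle.homMk _ _ q g (𝟙 b₂) hq₁ (comp_id _) hq₃)
      (contractible_distinguished a) hTV hTb h₂ h₃
  exact ⟨V, b₂, i, g ≫ t, _, hTV, h₁.extensionProduct hb₁, hb₂⟩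

end ExtensionProduct

section Thickening

open ObjectProperty

instance isTriangulated_isZero : ObjectProperty.IsTriangulated (IsZero : ObjectProperty 𝒯) where
  isStableUnderShiftBy n := ⟨fun _ h ↦ (shiftFunctor 𝒯 n).map_isZero h⟩
  toIsTriangulatedClosed₂ := .mk' fun T hT h₁ h₃ ↦ T.isZero₂_of_isZero₁₃ hT h₁ h₃

/-- The `n`-th thickening of `E`: the summands of `n`-fold extensions of objects of `E`, bracketed
to the left. Level `0` consists of the zero objects. -/
def thickening (E : ObjectProperty 𝒯) : ℕ → ObjectProperty 𝒯
  | 0 => IsZero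
  | n + 1 => ((thickening E n).extensionProduct E).retractClosure

variable {A E F S : ObjectProperty 𝒯}

lemma thickening_le [S.IsTriangulated] [S.IsStableUnderRetracts] (hE : E ≤ S) (n : ℕ) :
    thickening E n ≤ S := by
  induction n with
  | zero => exact fun _ ↦ S.prop_of_isZero
  | succ n ih =>
    rw [thickening, retractClosure_le_iff]
    exact extensionProduct_le_of_isTriangulatedClosed₂ ih hE

instance isStableUnderRetracts_thickening (n : ℕ) : (thickening E n).IsStableUnderRetracts := by
  cases n <;> rw [thickening] <;> infer_instance

instance containsZero_thickening [E.ContainsZero] (n : ℕ) : (thickening E n).ContainsZero := by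
  induction n <;> rw [thickening] <;> infer_instance

instance isStableUnderShift_thickening [E.IsStableUnderShift ℤ] (n : ℕ) :
    (thickening E n).IsStableUnderShift ℤ := by
  induction n <;> rw [thickening] <;> infer_instance

instance isClosedUnderBinaryProducts_thickening [E.IsClosedUnderBinaryProducts] (n : ℕ) :
    (thickening E n).IsClosedUnderBinaryProducts := by
  induction n <;> rw [thickening] <;> infer_instance

lemma monotone_thickening (E : ObjectProperty 𝒯) [E.ContainsZero] : Monotone (thickening E) :=
  monotone_nat_of_le_succ fun _ ↦ (le_extensionProduct_left E).trans (le_retractClosure _)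

lemma thickening_one [E.IsStableUnderRetracts] : thickening E 1 = E := by
  apply le_antisymm
  · rw [thickening, retractClosure_le_iff]
    exact isZero_extensionProduct_le E
  · exact (le_extensionProduct_right IsZero).trans (le_retractClosure _)

lemma extensionProduct_thickening_le [A.IsTriangulated] [A.IsClosedUnderIsomorphisms] {p : ℕ}
    (hA : A ≤ thickening E p) (hFE : F ≤ E) (hFA : F ≤ A.rightOrthogonal) (n : ℕ) :
    A.extensionProduct (thickening F n) ≤ thickening E (p + n) := by
  induction n with
  | zero =>
    exact (extensionProduct_le_of_isTriangulatedClosed₂ le_rfl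
      fun _ ↦ A.prop_of_isZero).trans hA
  | succ n ih =>
    calc A.extensionProduct ((thickening F n).extensionProduct F).retractClosure
      _ ≤ A.retractClosure.extensionProduct ((thickening F n).extensionProduct F).retractClosure :=
        monotone_extensionProduct_left _ A.le_retractClosure
      _ ≤ (A.extensionProduct ((thickening F n).extensionProduct F)).retractClosure :=
        extensionProduct_retractClosure_retractClosure_le _ _
      _ ≤ ((A.extensionProduct (thickening F n)).extensionProduct F).retractClosure :=
        monotone_retractClosure
          (extensionProduct_extensionProduct_le (thickening_le hFA n) hFA)
      _ ≤ ((thickening E (p + n)).extensionProduct F).retractClosure :=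
        monotone_retractClosure
          (monotone_extensionProduct_left _ ih)
      _ ≤ ((thickening E (p + n)).extensionProduct E).retractClosure :=
        monotone_retractClosure
          (monotone_extensionProduct_right _ hFE)

end Thickening

section Semiorthogonal

open ObjectProperty

/-- Semiorthogonality of a finite sequence of full subcategories: there are no nonzero morphisms
from a later member to an earlier one. -/
def IsSemiorthogonal {m : ℕ} (I : Fin m → ObjectProperty 𝒯) : Prop :=
  ∀ ⦃i j⦄, i < j → I i ≤ (I j).rightOrthogonal

/-- The subcategory `I (m - 1) * ⋯ * I 1 * I 0`, bracketed to the left. The order is reversed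
so that each factor is right orthogonal to the product of those on its left when `I` is
semiorthogonal. -/
def iteratedExtensionProduct : {m : ℕ} → (Fin m → ObjectProperty 𝒯) → ObjectProperty 𝒯
  | 0, _ => IsZero
  | _ + 1, I => (iteratedExtensionProduct fun l ↦ I l.succ).extensionProduct (I 0)

lemma iteratedExtensionProduct_le {S : ObjectProperty 𝒯} [S.IsTriangulated]
    [S.IsClosedUnderIsomorphisms] {m : ℕ} {I : Fin m → ObjectProperty 𝒯} (hI : ∀ l, I l ≤ S) :
    iteratedExtensionProduct I ≤ S := by
  induction m with
  | zero => exact fun _ ↦ S.prop_of_isZero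
  | succ m ih =>
    exact extensionProduct_le_of_isTriangulatedClosed₂ (ih fun l ↦ hI l.succ) (hI 0)

instance isClosedUnderIsomorphisms_iteratedExtensionProduct {m : ℕ}
    (I : Fin m → ObjectProperty 𝒯) :
    (iteratedExtensionProduct I).IsClosedUnderIsomorphisms := by
  cases m <;> rw [iteratedExtensionProduct] <;> infer_instance

lemma IsSemiorthogonal.zero_le_rightOrthogonal {m : ℕ} {I : Fin (m + 1) → ObjectProperty 𝒯}
    [(I 0).IsStableUnderShift ℤ] (hI : IsSemiorthogonal I) :
    I 0 ≤ (iteratedExtensionProduct fun l ↦ I l.succ).rightOrthogonal := by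
  have hle : (iteratedExtensionProduct fun l ↦ I l.succ) ≤ (I 0).leftOrthogonal :=
    iteratedExtensionProduct_le fun l _ hX _ f hY ↦ hI l.succ_pos _ hY f hX
  exact fun _ hY _ f hX ↦ hle _ hX f hY

instance containsZero_iteratedExtensionProduct {m : ℕ} (I : Fin m → ObjectProperty 𝒯)
    [∀ l, (I l).ContainsZero] : (iteratedExtensionProduct I).ContainsZero := by
  induction m with
  | zero => exact inferInstanceAs (ContainsZero (IsZero : ObjectProperty 𝒯))
  | succ m ih =>
    have := ih fun l ↦ I l.succ
    exact containsZero_extensionProduct _ _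

lemma le_iteratedExtensionProduct {m : ℕ} (I : Fin m → ObjectProperty 𝒯)
    [∀ l, (I l).ContainsZero] (l : Fin m) : I l ≤ iteratedExtensionProduct I := by
  induction m with
  | zero => exact l.elim0
  | succ m ih =>
    induction l using Fin.cases with
    | zero => exact le_extensionProduct_right (iteratedExtensionProduct fun l ↦ I l.succ)
    | succ l => exact (ih (fun l ↦ I l.succ) l).trans (le_extensionProduct_left _)

section

variable {m : ℕ} {I : Fin m → ObjectProperty 𝒯} [∀ l, (I l).IsTriangulated]
  [∀ l, (I l).IsClosedUnderIsomorphisms]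

lemma IsSemiorthogonal.isTriangulated_iteratedExtensionProduct (hI : IsSemiorthogonal I) :
    (iteratedExtensionProduct I).IsTriangulated := by
  induction m with
  | zero => exact isTriangulated_isZero
  | succ m ih =>
    have := ih fun i j hij ↦ hI (Fin.succ_lt_succ_iff.2 hij)
    exact isTriangulated_extensionProduct hI.zero_le_rightOrthogonal

lemma IsSemiorthogonal.iteratedExtensionProduct_le_thickening (hI : IsSemiorthogonal I)
    {F : Fin m → ObjectProperty 𝒯} {E : ObjectProperty 𝒯} {n : Fin m → ℕ}
    (hF : ∀ l, F l ≤ I l) (hE : ∀ l, F l ≤ E) (hn : ∀ l, I l ≤ thickening (F l) (n l)) :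
    iteratedExtensionProduct I ≤ thickening E (∑ l, n l) := by
  induction m with
  | zero => exact le_rfl
  | succ m ih =>
    have htail : IsSemiorthogonal fun l ↦ I l.succ :=
      fun i j hij ↦ hI (Fin.succ_lt_succ_iff.2 hij)
    have := htail.isTriangulated_iteratedExtensionProduct
    rw [Fin.sum_univ_succ, add_comm (n 0)]
    calc (iteratedExtensionProduct fun l ↦ I l.succ).extensionProduct (I 0)
      _ ≤ (iteratedExtensionProduct fun l ↦ I l.succ).extensionProduct (thickening (F 0) (n 0)) :=
        monotone_extensionProduct_right _ (hn 0)
      _ ≤ thickening E (∑ l : Fin m, n l.succ + n 0) :=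
        extensionProduct_thickening_le
          (ih htail (fun l ↦ hF l.succ) (fun l ↦ hE l.succ) (fun l ↦ hn l.succ)) (hE 0)
          ((hF 0).trans hI.zero_le_rightOrthogonal) (n 0)

end

instance isTriangulated_retractClosure (A : ObjectProperty 𝒯) [A.IsTriangulated]
    [A.IsClosedUnderIsomorphisms] : A.retractClosure.IsTriangulated where
  exists_zero := ⟨_, isZero_zero 𝒯, A.le_retractClosure _ A.prop_zero⟩
  toIsTriangulatedClosed₂ := .mk' fun T hT h₁ h₃ ↦ by
    have hext : A.retractClosure.extensionProduct A.retractClosure T.obj₂ :=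
      ⟨_, _, _, _, _, hT, h₁, h₃⟩
    exact monotone_retractClosure (extensionProduct_le_of_isTriangulatedClosed₂ le_rfl le_rfl) _
      (extensionProduct_retractClosure_retractClosure_le _ _ _ hext)

end Semiorthogonal

section ThickSubcategories

variable {S : Set 𝒯}

lemma IsThickTriangulatedSub.isStableUnderRetracts (hS : IsThickTriangulatedSub S) :
    (ofSet S).IsStableUnderRetracts :=
  isStableUnderRetracts_ofSet hS.summand

lemma IsThickTriangulatedSub.isTriangulated (hS : IsThickTriangulatedSub S) :
    (ofSet S).IsTriangulated where
  exists_zero := ⟨_, isZero_zero 𝒯, hS.zero _ (isZero_zero 𝒯)⟩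
  isStableUnderShiftBy n := ⟨fun X ↦ hS.shift X n⟩
  toIsTriangulatedClosed₂ :=
    have := hS.isStableUnderRetracts
    .mk' hS.ext₂

lemma ofSet_star (I J : Set 𝒯) : ofSet (star I J) = (ofSet I).extensionProduct (ofSet J) :=
  rfl

end ThickSubcategories

end Pretriangulated

section AngleN

lemma ofSet_angleN_succ (I : Set C) (n : ℕ) :
    ofSet (angleN I (n + 1)) = thickening (ofSet (angle I)) (n + 1) := by
  induction n with
  | zero => exact (thickening_one (E := ofSet (angle I))).symm
  | succ n ih => exact ofSet_angle_eq_retractClosure (by rw [ofSet_star, ih])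

lemma ofSet_angleInf_le {I : Set C} {P : ObjectProperty C} [P.IsTriangulated]
    [P.IsStableUnderRetracts] (hI : ofSet I ≤ P) : ofSet (angleInf I) ≤ P := by
  intro X hX
  obtain ⟨n, hn⟩ := Set.mem_iUnion.1 hX
  cases n with
  | zero => exact hn.elim
  | succ n =>
    have hthick : thickening (ofSet (angle I)) (n + 1) ≤ P := thickening_le (ofSet_angle_le hI) _
    exact hthick X (ofSet_angleN_succ I n ▸ hn)

end AngleN

section RouquierDimension

lemma exists_relRouquierDim_eq {S : Set C} (hS : relRouquierDim S ≠ ⊤) :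
    ∃ n : ℕ, relRouquierDim S = n ∧ ∃ G ∈ S, S = angleN {G} (n + 1) := by
  have hne : {c : ℕ∞ | ∃ n : ℕ, c = n ∧ ∃ G ∈ S, S = angleN {G} (n + 1)}.Nonempty := by
    rw [Set.nonempty_iff_ne_empty]
    intro hempty
    exact hS (by rw [relRouquierDim, hempty, sInf_empty])
  exact csInf_mem hne

lemma relRouquierDim_univ_le_sub_one {G : C} {n : ℕ}
    (hG : ⊤ ≤ thickening (ofSet (angle {G})) n) :
    relRouquierDim (Set.univ : Set C) ≤ (n : ℕ∞) - 1 := by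
  have huniv : ⊤ ≤ ofSet (angleN {G} (n - 1 + 1)) := by
    rw [ofSet_angleN_succ]
    exact hG.trans (monotone_thickening _ le_tsub_add)
  exact sInf_le ⟨n - 1, by simp, G, trivial,
    (Set.eq_univ_of_forall fun X ↦ huniv X trivial).symm⟩

end RouquierDimension

/-- If `ℐ_1, …, ℐ_m` are thick full triangulated subcategories such that
`Hom(K, L) = 0` whenever `K ∈ ℐ_j`, `L ∈ ℐ_i` with `j > i`, and `⟨ℐ_1 ∪ ⋯ ∪ ℐ_m⟩_∞ = 𝒯`,
then `rdim 𝒯 ≤ ∑_{l=1}^m (rdim ℐ_l + 1) − 1`. -/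
theorem rouquierDim_le_of_sod (m : ℕ) (I : Fin m → Set C)
    (hI : ∀ l, IsThickTriangulatedSub (I l))
    (horth : ∀ i j : Fin m, i < j → ∀ (K L : C), K ∈ I j → L ∈ I i → ∀ f : K ⟶ L, f = 0)
    (hgen : angleInf (⋃ l, I l) = Set.univ) :
    relRouquierDim (Set.univ : Set C) ≤ (∑ l : Fin m, (relRouquierDim (I l) + 1)) - 1 := by
  by_cases htop : ∑ l, (relRouquierDim (I l) + 1) = ⊤
  · simp [htop]
  have hfin : ∀ l, relRouquierDim (I l) ≠ ⊤ := by simpa [WithTop.sum_eq_top] using htop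
  choose n hn g hg hIg using fun l ↦ exists_relRouquierDim_eq (hfin l)
  have hsum : ∑ l, (relRouquierDim (I l) + 1) = ((∑ l, (n l + 1) : ℕ) : ℕ∞) := by simp [hn]
  have htri (l) := (hI l).isTriangulated
  have hretract (l) := (hI l).isStableUnderRetracts
  have hsemi : IsSemiorthogonal fun l ↦ ofSet (I l) :=
    fun i j hij L hL K f hK ↦ horth i j hij K L hK hL f
  have hprod := hsemi.isTriangulated_iteratedExtensionProduct
  have hcount : iteratedExtensionProduct (fun l ↦ ofSet (I l)) ≤
      thickening (ofSet (angle {⨁ g})) (∑ l, (n l + 1)) :=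
    hsemi.iteratedExtensionProduct_le_thickening (F := fun l ↦ ofSet (angle {g l}))
      (fun l ↦ ofSet_angle_le (by rintro _ rfl; exact hg l))
      (fun l ↦ ofSet_angle_singleton_le ⟨biproduct.ι g l, biproduct.π g l, by simp⟩)
      (fun l ↦ by rw [← ofSet_angleN_succ, ← hIg l])
  have hall : ⊤ ≤ (iteratedExtensionProduct fun l ↦ ofSet (I l)).retractClosure := by
    rintro X -
    refine ofSet_angleInf_le (fun Y hY ↦ ?_) X (hgen.ge trivial)
    obtain ⟨l, hl⟩ := Set.mem_iUnion.1 hY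
    exact ObjectProperty.le_retractClosure _ _ (le_iteratedExtensionProduct _ l Y hl)
  rw [hsum]
  exact relRouquierDim_univ_le_sub_one
    (hall.trans ((ObjectProperty.retractClosure_le_iff _ _).2 hcount))

end RouquierDim
end

section
/- Let 𝒯 be a ℤ/m-graded triangulated category (1 ≤ m ≤ ∞), let k be a field, and let R be a commutative k-algebra of finite type acting centrally on 𝒯. Suppose there exists a split-generator G of 𝒯 such that Hom^•(G, G) is a Noetherian R-module. Then rdim 𝒯 ≥ dim_R Hom^•(G, G), the Krull dimension of the R-module Hom^•(G, G). -/
open CategoryTheory Category Limits Pretriangulated DirectSum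

universe v u

namespace RouquierDim

variable {C : Type u} [Category.{v} C] [Preadditive C] [HasZeroObject C]
  [HasShift C ℤ] [∀ n : ℤ, (shiftFunctor C n).Additive] [Pretriangulated C]
  [HasBinaryBiproducts C]

/-- `G` is a split-generator of the triangulated category `C`:
`C = ⟨G⟩_n` for some `n ∈ ℕ`. -/
def IsSplitGenerator (G : C) : Prop := ∃ n : ℕ, angleN {G} n = Set.univ

/-- A central action of a commutative ring `R` on the (`ℤ/m`-graded) triangulated
category `C`: a ring homomorphism `φ K : R →+* End K` for every object `K`, natural in `K`
and compatible with the shift. -/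
structure CentralAction (R : Type*) [CommRing R] where
  φ : ∀ K : C, R →+* End K
  natural : ∀ {K L : C} (f : K ⟶ L) (r : R), φ K r ≫ f = f ≫ φ L r
  shift_comm : ∀ (K : C) (r : R) (n : ℤ), φ (K⟦n⟧) r = (φ K r)⟦n⟧'

variable {R : Type*} [CommRing R]

/-- The `R`-module structure on `Hom(X, Y)` induced by a central action:
`r • f = f ≫ φ Y r` (equivalently, `φ X r ≫ f`, by naturality). -/
def CentralAction.homModule (A : CentralAction (C := C) R) (X Y : C) :
    Module R (X ⟶ Y) :=
  Module.compHom (X ⟶ Y) (A.φ Y)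

/-- `Hom^•(X, Y) = ⊕_{i ∈ ℤ/m} Hom(X, Σ^i Y)` as an `R`-module, for the `ℤ/m`-graded
triangulated category `C` (`m = 0` encodes `m = ∞`, in which case `ℤ/m = ℤ`), packaged
as an object of `ModuleCat R`. -/
noncomputable def CentralAction.HomBullet (A : CentralAction (C := C) R) (m : ℕ)
    (X Y : C) : ModuleCat R :=
  letI : ∀ i : ZMod m, Module R (X ⟶ Y⟦(ZMod.cast i : ℤ)⟧) := fun _ => A.homModule _ _
  ModuleCat.of R (⨁ i : ZMod m, (X ⟶ Y⟦(ZMod.cast i : ℤ)⟧))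

variable (C) in
/-- The Rouquier dimension of the triangulated category `C`: the smallest `n ∈ ℕ ∪ {∞}`
such that `C = ⟨G⟩_{n+1}` for some object `G`. -/
noncomputable def rouquierDim : ℕ∞ :=
  sInf {c : ℕ∞ | ∃ n : ℕ, c = (n : ℕ∞) ∧ ∃ G : C, angleN {G} (n + 1) = Set.univ}

/-!
By Noether normalization we may replace `R` by a polynomial ring `P` in `d` variables over which
`Hom^•(G, G)` is finite and which acts faithfully on `G`, where `d` bounds the Krull dimension in
question. Let `H` be any object with `⟨H⟩_n` everything. As `G` generates, `Hom^•(H, G)` is finite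
over `P` as well, so by generic freeness there is `g ≠ 0` such that `Hom^•(H, G)` and
`Hom^•(G, G)` become flat after inverting `g`. In `P` there is a regular sequence `x₁, …, x_d`
such that no power of `g` lies in the ideal it generates; by flatness it is regular on the
localized Hom modules. Successive cocones of the `xᵢ` form a tower `K_d ⟶ ⋯ ⟶ K₁ ⟶ K₀ = G` in
which the `i`-th map is killed by `xᵢ`, hence by regularity vanishes on the localization of every
`Hom(H⟦j⟧, -)`: it is a ghost. The composite of the tower is nonzero after inverting `g`, because
`𝟙 G` does not lie in `(x₁, …, x_d) Hom(G, G)[g⁻¹]`. By the ghost lemma a composite of `n` ghosts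
out of any object of `⟨H⟩_n` dies after inverting `g`, so `d < n`.
-/

open RingTheory.Sequence Pointwise

/-- Every non-nilpotent element of `A` lies outside the radical of an ideal generated by a weakly
regular sequence of length `d`: away from any hypersurface there is still room for a Koszul tower
of height `d`. Sequences are lists, as in `RingTheory.Sequence`. -/
def HasAvoidingSequence (d : ℕ) (A : Type*) [CommRing A] : Prop :=
  ∀ g : A, ¬ IsNilpotent g →
    ∃ rs : List A, rs.length = d ∧ IsWeaklyRegular A rs ∧ g ∉ (Ideal.ofList rs).radical

section RegularSequences

variable {A B : Type*} [CommRing A] [CommRing B]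

lemma hasAvoidingSequence_zero : HasAvoidingSequence 0 A := fun _ hg ↦
  ⟨[], rfl, .nil A A, by rwa [Ideal.ofList_nil]⟩

lemma HasAvoidingSequence.of_ringEquiv {d : ℕ} (e : A ≃+* B) (h : HasAvoidingSequence d A) :
    HasAvoidingSequence d B := by
  intro g hg
  obtain ⟨rs, hlen, hreg, hrad⟩ := h (e.symm g) (by rwa [IsNilpotent.map_iff e.symm.injective])
  refine ⟨rs.map (e : A →+* B), by rwa [List.length_map], ?_, ?_⟩
  · have := RingHomInvPair.of_ringEquiv e
    have := RingHomInvPair.symm (e : A →+* B) e.symm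
    exact (e.toSemilinearEquiv.isWeaklyRegular_congr' rs).1 hreg
  · rw [← Ideal.map_ofList]
    intro hg'
    apply hrad
    rw [← Ideal.mem_comap, Ideal.comap_radical]
    simpa [Ideal.comap_symm, Ideal.map] using hg'

open Polynomial

lemma one_add_X_mul_mem_nonZeroDivisors (p : A[X]) : 1 + X * p ∈ nonZeroDivisors A[X] :=
  mem_nonzeroDivisors_of_coeff_mem 0 (by simp)

lemma isNilpotent_of_mem_radical_span_one_add_X_mul {p : A[X]}
    (hp : p ∈ (Ideal.span {1 + X * p}).radical) : IsNilpotent p := by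
  obtain ⟨n, hn⟩ := hp
  have hcoprime : IsCoprime (1 + X * p) (p ^ n) := .pow_right ⟨1, -X, by ring⟩
  have hunit : IsUnit (Polynomial.C 1 + X * p) :=
    hcoprime.isUnit_of_dvd' dvd_rfl (Ideal.mem_span_singleton.1 hn)
  exact (isUnit_C_add_X_mul_iff.1 hunit).2

lemma mem_map_C_iff_map_mk_eq_zero {I : Ideal A} {p : A[X]} :
    p ∈ I.map Polynomial.C ↔ p.map (Ideal.Quotient.mk I) = 0 := by
  rw [← coe_mapRingHom, ← RingHom.mem_ker, ker_mapRingHom, Ideal.mk_ker]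

lemma isSMulRegular_one_add_X_mul_quotient_map_C (I : Ideal A) (p : A[X]) :
    IsSMulRegular (A[X] ⧸ I.map Polynomial.C) (1 + X * p) := by
  rw [isSMulRegular_quotient_iff_mem_of_smul_mem]
  intro q hq
  rw [mem_map_C_iff_map_mk_eq_zero] at hq ⊢
  refine (one_add_X_mul_mem_nonZeroDivisors (p.map (Ideal.Quotient.mk I))).1 _ ?_
  simpa using hq

lemma isNilpotent_map_of_mem_radical_map_C_sup_span {I : Ideal A} {p : A[X]}
    (hp : p ∈ (I.map Polynomial.C ⊔ Ideal.span {1 + X * p}).radical) :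
    IsNilpotent (p.map (Ideal.Quotient.mk I)) := by
  apply isNilpotent_of_mem_radical_span_one_add_X_mul
  have hmap := Ideal.map_radical_le (mapRingHom (Ideal.Quotient.mk I)) (Ideal.mem_map_of_mem _ hp)
  have hker : (I.map Polynomial.C).map (mapRingHom (Ideal.Quotient.mk I)) = ⊥ := by
    rw [Ideal.map_eq_bot_iff_le_ker, ker_mapRingHom, Ideal.mk_ker]
  simpa [Ideal.map_sup, hker, Ideal.map_span] using hmap

lemma HasAvoidingSequence.polynomial {d : ℕ} (h : HasAvoidingSequence d A) :
    HasAvoidingSequence (d + 1) A[X] := by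
  intro g hg
  obtain ⟨j, hj⟩ : ∃ j, ¬ IsNilpotent (g.coeff j) := by
    simpa only [Polynomial.isNilpotent_iff, not_forall] using hg
  obtain ⟨rs, hlen, hreg, hrad⟩ := h _ hj
  -- `g` is invertible modulo `1 + X * g`, so the hypersurface cut out by the latter avoids `g = 0`.
  refine ⟨rs.map Polynomial.C ++ [1 + X * g], by simp [hlen], ?_, fun hmem ↦ hrad ?_⟩
  · rw [isWeaklyRegular_append_iff, isWeaklyRegular_singleton_iff, ← Ideal.map_ofList,
      smul_eq_mul, Ideal.mul_top]
    exact ⟨hreg.of_flat, isSMulRegular_one_add_X_mul_quotient_map_C _ g⟩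
  · rw [Ideal.ofList_append, Ideal.ofList_singleton, ← Ideal.map_ofList] at hmem
    obtain ⟨n, hn⟩ := Polynomial.isNilpotent_iff.1
      (isNilpotent_map_of_mem_radical_map_C_sup_span hmem) j
    refine ⟨n, ?_⟩
    rwa [coeff_map, ← map_pow, Ideal.Quotient.eq_zero_iff_mem] at hn

lemma hasAvoidingSequence_mvPolynomial (d : ℕ) :
    HasAvoidingSequence d (MvPolynomial (Fin d) A) := by
  induction d with
  | zero => exact hasAvoidingSequence_zero
  | succ d ih => exact ih.polynomial.of_ringEquiv (MvPolynomial.finSuccEquiv A d).symm.toRingEquiv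

end RegularSequences

section Localization

variable {P M N : Type*} [CommRing P] [AddCommGroup M] [Module P M] [AddCommGroup N] [Module P N]

lemma exists_ne_zero_flat_localizedModule_powers (P M : Type*) [CommRing P] [IsDomain P]
    [IsNoetherianRing P] [AddCommGroup M] [Module P M] [Module.Finite P M] :
    ∃ g : P, g ≠ 0 ∧ Module.Flat P (LocalizedModule (Submonoid.powers g) M) := by
  have : Module.FinitePresentation P M := Module.finitePresentation_of_finite P M
  obtain ⟨g, hg, hfree, -⟩ := Module.FinitePresentation.exists_free_localizedModule_powers
    (nonZeroDivisors P) (LocalizedModule.mkLinearMap (nonZeroDivisors P) M) (FractionRing P)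
  have : Module.Flat P (Localization (Submonoid.powers g)) := IsLocalization.flat _ (.powers g)
  exact ⟨g, nonZeroDivisors.ne_zero hg, Module.Flat.trans P (Localization (.powers g)) _⟩

/-- The map of localized modules induced by a linear map, as a `P`-linear map. -/
noncomputable abbrev locMap (S : Submonoid P) (f : M →ₗ[P] N) :
    LocalizedModule S M →ₗ[P] LocalizedModule S N :=
  IsLocalizedModule.map S (LocalizedModule.mkLinearMap S M) (LocalizedModule.mkLinearMap S N) f

lemma flat_localizedModule_of_retract (S : Submonoid P) (i : N →ₗ[P] M) (r : M →ₗ[P] N)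
    (hri : r ∘ₗ i = LinearMap.id) [Module.Flat P (LocalizedModule S M)] :
    Module.Flat P (LocalizedModule S N) :=
  Module.Flat.of_retract (locMap S i) (locMap S r) <| by
    rw [← IsLocalizedModule.map_comp', hri, IsLocalizedModule.map_id]

lemma isWeaklyRegular_of_flat [Module.Flat P M] {rs : List P} (hrs : IsWeaklyRegular P rs) :
    IsWeaklyRegular M rs :=
  ((TensorProduct.rid P M).isWeaklyRegular_congr rs).1 hrs.isWeaklyRegular_lTensor

lemma isWeaklyRegular_of_surjective_of_ker {f : M →ₗ[P] N} (hf : Function.Surjective f) {x : P}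
    {xs : List P} (hker : LinearMap.ker f = x • ⊤) (h : IsWeaklyRegular M (x :: xs)) :
    IsWeaklyRegular N xs :=
  let e := Submodule.quotEquivOfEq _ _ hker.symm ≪≫ₗ f.quotKerEquivOfSurjective hf
  (e.isWeaklyRegular_congr xs).1 ((isWeaklyRegular_cons_iff M x xs).1 h).2

lemma mem_ofList_cons_smul_top_of_surjective {f : M →ₗ[P] N} (hf : Function.Surjective f) {x : P}
    {xs : List P} (hker : LinearMap.ker f = x • ⊤) {a : M}
    (ha : f a ∈ Ideal.ofList xs • (⊤ : Submodule P N)) :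
    a ∈ Ideal.ofList (x :: xs) • (⊤ : Submodule P M) := by
  rwa [← Submodule.mem_comap, Submodule.comap_smul_top_of_surjective _ _ hf, hker, sup_comm,
    ← Ideal.ofList_cons_smul] at ha

lemma radical_annihilator_quotient_smul_top [Module.Finite P M] [FaithfulSMul P M] (I : Ideal P) :
    (Module.annihilator P (M ⧸ (I • ⊤ : Submodule P M))).radical = I.radical := by
  rw [← PrimeSpectrum.zeroLocus_eq_iff, ← Module.support_eq_zeroLocus, Module.support_quotient,
    Module.support_eq_zeroLocus, Module.annihilator_eq_bot.2 inferInstance]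
  simp

lemma exists_smul_mem_smul_top {S : Submonoid P} {I : Ideal P} {a : M}
    (ha : LocalizedModule.mkLinearMap S M a ∈ I • (⊤ : Submodule P (LocalizedModule S M))) :
    ∃ s ∈ S, s • a ∈ I • (⊤ : Submodule P M) := by
  set Q := M ⧸ (I • ⊤ : Submodule P M)
  have hbot : I • (⊤ : Submodule P (LocalizedModule S Q)) = ⊥ := by
    refine eq_bot_iff.2 (Submodule.smul_le.2 fun r hr z _ ↦ ?_)
    obtain ⟨⟨q, s⟩, rfl⟩ := IsLocalizedModule.mk'_surjective S (LocalizedModule.mkLinearMap S Q) z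
    obtain ⟨b, rfl⟩ := Submodule.Quotient.mk_surjective _ q
    have hrb : r • (Submodule.Quotient.mk b : Q) = 0 :=
      (Submodule.Quotient.mk_eq_zero _).2 (Submodule.smul_mem_smul hr trivial)
    simp [← IsLocalizedModule.mk'_smul, hrb]
  have hQ := Submodule.smul_top_le_comap_smul_top I (locMap S (Submodule.mkQ (I • ⊤))) ha
  rw [hbot, Submodule.mem_comap, Submodule.mem_bot, IsLocalizedModule.map_apply,
    IsLocalizedModule.eq_zero_iff S] at hQ
  obtain ⟨s, hs⟩ := hQ
  exact ⟨s, s.2, (Submodule.Quotient.mk_eq_zero _).1 hs⟩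

lemma exists_mem_radical_of_mk_one_mem (E : Type*) [Ring E] [Algebra P E] [Module.Finite P E]
    [FaithfulSMul P E] {S : Submonoid P} {I : Ideal P}
    (h : LocalizedModule.mkLinearMap S E 1 ∈ I • (⊤ : Submodule P (LocalizedModule S E))) :
    ∃ s ∈ S, s ∈ I.radical := by
  obtain ⟨s, hs, hsE⟩ := exists_smul_mem_smul_top h
  refine ⟨s, hs, ?_⟩
  rw [← radical_annihilator_quotient_smul_top (M := E)]
  refine Ideal.le_radical (Module.mem_annihilator.2 fun e ↦ ?_)
  obtain ⟨e, rfl⟩ := Submodule.Quotient.mk_surjective _ e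
  rw [← Submodule.Quotient.mk_smul, Submodule.Quotient.mk_eq_zero]
  simpa using Submodule.smul_top_le_comap_smul_top I (LinearMap.mulRight P e) hsE

section FourTerm

variable {L : Type*} [AddCommGroup L] [Module P L] {S : Submonoid P} {x : P}
  {u : M →ₗ[P] N} {v : N →ₗ[P] L}

lemma locMap_exact (huv : Function.Exact u v) : Function.Exact (locMap S u) (locMap S v) :=
  IsLocalizedModule.map_exact S _ _ _ u v huv

lemma locMap_surjective_of_exact (huv : Function.Exact u v) (hxv : x • v = 0)
    (hx : IsSMulRegular (LocalizedModule S L) x) : Function.Surjective (locMap S u) := by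
  have hxv' : x • locMap S v = 0 := by rw [← map_smul, hxv, map_zero]
  have hv : locMap S v = 0 :=
    LinearMap.ext fun n ↦ hx.right_eq_zero_of_smul (LinearMap.congr_fun hxv' n)
  rw [← LinearMap.range_eq_top, ← LinearMap.exact_iff.1 (locMap_exact huv), hv, LinearMap.ker_zero]

lemma ker_locMap_of_exact (hxu : Function.Exact (x • (LinearMap.id : M →ₗ[P] M)) u) :
    LinearMap.ker (locMap S u) = x • ⊤ := by
  rw [LinearMap.exact_iff.1 (locMap_exact hxu), locMap, map_smul, IsLocalizedModule.map_id]
  exact LinearMap.range_eq_map _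

end FourTerm

end Localization

section Generation

lemma angle_induction {D : Type*} [Category* D] [Preadditive D] [HasShift D ℤ]
    [HasBinaryBiproducts D] {I : Set D} {p : D → Prop} (mem : ∀ X ∈ I, p X)
    (zero : ∀ X, IsZero X → p X) (shift : ∀ X (n : ℤ), p X → p (X⟦n⟧))
    (sum : ∀ X Y, p X → p Y → p (X ⊞ Y)) (summand : ∀ X Y, IsSummand X Y → p Y → p X)
    {X : D} (hX : X ∈ angle I) : p X := by
  induction (hX : angleMem I X) with
  | of hX => exact mem _ hX
  | zero hX => exact zero _ hX
  | shift n _ ih => exact shift _ n ih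
  | sum _ _ ihX ihY => exact sum _ _ ihX ihY
  | smd h _ ih => exact summand _ _ h ih
  | iso e _ ih => exact summand _ _ ⟨e.inv, e.hom, e.inv_hom_id⟩ ih

lemma angleN_induction {H : C} {p : C → Prop} (self : p H) (zero : ∀ X, IsZero X → p X)
    (shift : ∀ X (n : ℤ), p X → p (X⟦n⟧)) (summand : ∀ X Y, IsSummand X Y → p Y → p X)
    (triangle : ∀ T ∈ distTriang C, p T.obj₁ → p T.obj₃ → p T.obj₂) :
    ∀ {n : ℕ} {X : C}, X ∈ angleN {H} n → p X := by
  have sum (X Y : C) (hX : p X) (hY : p Y) : p (X ⊞ Y) :=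
    triangle _ (binaryBiproductTriangle_distinguished X Y) hX hY
  have angle_self {X : C} (hX : X ∈ angle {H}) : p X :=
    angle_induction (by rintro _ rfl; exact self) zero shift sum summand hX
  intro n
  induction n using angleN.induct with
  | case1 => exact fun hX ↦ hX.elim
  | case2 => exact angle_self
  | case3 n ih =>
    refine angle_induction ?_ zero shift sum summand
    rintro X ⟨K₀, K₁, f, g, h, hT, hK₀, hK₁⟩
    exact triangle _ hT (ih hK₀) (angle_self hK₁)

end Generation

section Ghost

variable {D : Type*} [Category* D] [Preadditive D] {P : Type*} [CommRing P] [Linear P D]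

/-- A morphism `f` is an `S`-ghost for the class `Q` if, after inverting `S`, it induces the zero
map on `Hom(Z, -)` for every `Z` in `Q`. -/
def IsGhost (S : Submonoid P) (Q : ObjectProperty D) {X Y : D} (f : X ⟶ Y) : Prop :=
  ∀ ⦃Z⦄, Q Z → ∀ a : Z ⟶ X, ∃ s ∈ S, s • (a ≫ f) = 0

/-- A morphism which factors as an arbitrary morphism followed by `n` composable `S`-ghosts;
the initial morphism makes the notion stable under precomposition. -/
inductive IsGhostComp (S : Submonoid P) (Q : ObjectProperty D) : ∀ ⦃X Y : D⦄, ℕ → (X ⟶ Y) → Prop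
  | zero {X Y : D} (f : X ⟶ Y) : IsGhostComp S Q 0 f
  | comp {n : ℕ} {X Y Z : D} {u : X ⟶ Y} {v : Y ⟶ Z} (hu : IsGhostComp S Q n u)
      (hv : IsGhost S Q v) : IsGhostComp S Q (n + 1) (u ≫ v)

/-- Every `n`-fold composite of `S`-ghosts starting at `X` is annihilated by an element of `S`. -/
def AnnihilatesGhosts (S : Submonoid P) (Q : ObjectProperty D) (n : ℕ) (X : D) : Prop :=
  ∀ ⦃Y⦄ ⦃f : X ⟶ Y⦄, IsGhostComp S Q n f → ∃ s ∈ S, s • f = 0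

variable {S : Submonoid P} {Q : ObjectProperty D} {X Y Z : D} {n : ℕ}

lemma IsGhost.postcomp {f : X ⟶ Y} (hf : IsGhost S Q f) (g : Y ⟶ Z) : IsGhost S Q (f ≫ g) := by
  intro W hW a
  obtain ⟨s, hs, h⟩ := hf hW a
  exact ⟨s, hs, by rw [← assoc, ← Linear.smul_comp, h, zero_comp]⟩

lemma IsGhostComp.postcomp {f : X ⟶ Y} (hf : IsGhostComp S Q n f) (g : Y ⟶ Z) :
    IsGhostComp S Q n (f ≫ g) := by
  cases hf with
  | zero => exact .zero _
  | comp hu hv => rw [assoc]; exact hu.comp (hv.postcomp g)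

lemma IsGhostComp.precomp {f : Y ⟶ Z} (hf : IsGhostComp S Q n f) (g : X ⟶ Y) :
    IsGhostComp S Q n (g ≫ f) := by
  induction hf with
  | zero => exact .zero _
  | comp _ hv ih => rw [← assoc]; exact (ih g).comp hv

lemma IsGhostComp.of_succ {f : X ⟶ Y} (hf : IsGhostComp S Q (n + 1) f) : IsGhostComp S Q n f := by
  induction n generalizing X Y with
  | zero => exact .zero _
  | succ n ih => cases hf with | comp hu hv => exact (ih hu).comp hv

lemma IsGhostComp.of_le {k : ℕ} (hkn : k ≤ n) {f : X ⟶ Y} (hf : IsGhostComp S Q n f) :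
    IsGhostComp S Q k f := by
  induction hkn with
  | refl => exact hf
  | step _ ih => exact ih hf.of_succ

lemma annihilatesGhosts_of_isZero (hX : IsZero X) : AnnihilatesGhosts S Q n X :=
  fun _ _ _ ↦ ⟨1, S.one_mem, hX.eq_of_src _ _⟩

lemma AnnihilatesGhosts.of_isSummand (h : IsSummand X Y) (hY : AnnihilatesGhosts S Q n Y) :
    AnnihilatesGhosts S Q n X := by
  obtain ⟨r, k, hrk⟩ := h
  intro Z f hf
  obtain ⟨s, hs, hsf⟩ := hY (hf.precomp k)
  exact ⟨s, hs, by rw [← id_comp f, ← hrk, assoc, ← Linear.comp_smul, hsf, comp_zero]⟩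

lemma AnnihilatesGhosts.biprod [HasBinaryBiproduct X Y] (hX : AnnihilatesGhosts S Q n X)
    (hY : AnnihilatesGhosts S Q n Y) : AnnihilatesGhosts S Q n (X ⊞ Y) := by
  intro Z f hf
  obtain ⟨s, hs, hsf⟩ := hX (hf.precomp biprod.inl)
  obtain ⟨t, ht, htf⟩ := hY (hf.precomp biprod.inr)
  refine ⟨s * t, S.mul_mem hs ht, biprod.hom_ext' _ _ ?_ ?_⟩
  · rw [Linear.comp_smul, mul_comm, mul_smul, hsf, smul_zero, comp_zero]
  · rw [Linear.comp_smul, mul_smul, htf, smul_zero, comp_zero]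

lemma annihilatesGhosts_one_of_mem (hX : Q X) : AnnihilatesGhosts S Q 1 X := by
  rintro Y _ (_ | ⟨_, hv⟩)
  exact hv hX _

lemma AnnihilatesGhosts.of_mem_star [HasZeroObject D] [HasShift D ℤ]
    [∀ n : ℤ, (shiftFunctor D n).Additive] [Pretriangulated D] {I J : Set D}
    (hI : ∀ X ∈ I, AnnihilatesGhosts S Q n X) (hJ : ∀ X ∈ J, AnnihilatesGhosts S Q 1 X)
    (hX : X ∈ star I J) : AnnihilatesGhosts S Q (n + 1) X := by
  obtain ⟨K₀, K₁, f, g, h, hT, hK₀, hK₁⟩ := hX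
  rintro Y _ (_ | @⟨_, _, _, _, u, v, hu, hv⟩)
  obtain ⟨s, hs, hsu⟩ := hI K₀ hK₀ (hu.precomp f)
  obtain ⟨w, hw⟩ : ∃ w : K₁ ⟶ _, s • u = g ≫ w :=
    Triangle.yoneda_exact₂ _ hT _ ((Linear.comp_smul ..).trans hsu)
  obtain ⟨t, ht, htw⟩ := hJ K₁ hK₁ (.comp (.zero w) hv)
  refine ⟨t * s, S.mul_mem ht hs, ?_⟩
  rw [mul_smul, ← Linear.smul_comp, hw, assoc, ← Linear.comp_smul, htw, comp_zero]

section Shift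

variable [HasShift D ℤ] [∀ n : ℤ, (shiftFunctor D n).Additive]
  [∀ n : ℤ, (shiftFunctor D n).Linear P] [Q.IsStableUnderShift ℤ]

lemma IsGhost.shift {f : X ⟶ Y} (hf : IsGhost S Q f) (j : ℤ) : IsGhost S Q (f⟦j⟧') := by
  intro Z hZ a
  obtain ⟨b, hb⟩ := (shiftFunctor D j).map_surjective ((shiftNegShift Z j).hom ≫ a)
  obtain ⟨s, hs, hsb⟩ := hf (Q.le_shift (-j) Z hZ) b
  refine ⟨s, hs, ?_⟩
  rw [← Iso.inv_hom_id_assoc (shiftNegShift Z j) a, ← hb, assoc, ← Functor.map_comp,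
    ← Linear.comp_smul, ← Functor.map_smul, hsb, Functor.map_zero, comp_zero]

lemma IsGhostComp.shift {f : X ⟶ Y} (hf : IsGhostComp S Q n f) (j : ℤ) :
    IsGhostComp S Q n (f⟦j⟧') := by
  induction hf with
  | zero => exact .zero _
  | comp _ hv ih => rw [Functor.map_comp]; exact ih.comp (hv.shift j)

lemma AnnihilatesGhosts.shift (hX : AnnihilatesGhosts S Q n X) (j : ℤ) :
    AnnihilatesGhosts S Q n (X⟦j⟧) := by
  intro Y f hf
  obtain ⟨b, hb⟩ := (shiftFunctor D j).map_surjective (f ≫ (shiftNegShift Y j).inv)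
  have hb_ghost : IsGhostComp S Q n b := by
    have h := ((hf.postcomp (shiftNegShift Y j).inv).shift (-j)).precomp (shiftShiftNeg X j).inv
    rw [← hb] at h
    have hb_conj := shiftFunctorCompIsoId_naturality_1 b j (-j) (add_neg_cancel j)
    rw [← hb_conj, ← assoc]
    exact h.postcomp (shiftShiftNeg _ j).hom
  obtain ⟨s, hs, hsb⟩ := hX hb_ghost
  refine ⟨s, hs, ?_⟩
  rw [← cancel_mono (shiftNegShift Y j).inv, Linear.smul_comp, ← hb, ← Functor.map_smul, hsb,
    Functor.map_zero, zero_comp]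

lemma annihilatesGhosts_of_mem_angle [HasBinaryBiproducts D] {I : Set D}
    (hI : ∀ X ∈ I, AnnihilatesGhosts S Q n X) :
    ∀ X ∈ angle I, AnnihilatesGhosts S Q n X :=
  fun _ ↦ angle_induction hI (fun _ ↦ annihilatesGhosts_of_isZero) (fun _ j hX ↦ hX.shift j)
    (fun _ _ ↦ .biprod) (fun _ _ ↦ .of_isSummand)

end Shift

end Ghost

section GhostLemma

variable {P : Type*} [CommRing P] [Linear P C] [∀ n : ℤ, (shiftFunctor C n).Linear P]
  {S : Submonoid P} {Q : ObjectProperty C} [Q.IsStableUnderShift ℤ]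

theorem annihilatesGhosts_of_mem_angleN {H : C} (hH : Q H) :
    ∀ n, ∀ X ∈ angleN {H} n, AnnihilatesGhosts S Q n X := by
  have one : ∀ X ∈ angle {H}, AnnihilatesGhosts S Q 1 X :=
    annihilatesGhosts_of_mem_angle (by rintro _ rfl; exact annihilatesGhosts_one_of_mem hH)
  intro n
  induction n using angleN.induct with
  | case1 => exact fun _ hX ↦ hX.elim
  | case2 => exact one
  | case3 n ih => exact annihilatesGhosts_of_mem_angle fun X hX ↦ .of_mem_star ih one hX

end GhostLemma

section ConnectingMaps

variable {D : Type*} [Category* D] [Preadditive D] [HasShift D ℤ]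
  [∀ n : ℤ, (shiftFunctor D n).Additive] (P : Type*) [CommRing P] [Linear P D]
  [∀ n : ℤ, (shiftFunctor D n).Linear P]

/-- The shift functor as an isomorphism between modules of morphisms. -/
noncomputable def homShiftEquiv (X Y : D) (n : ℤ) : (X ⟶ Y) ≃ₗ[P] (X⟦n⟧ ⟶ Y⟦n⟧) :=
  .ofBijective ((shiftFunctor D n).mapLinearMap P)
    ((Functor.FullyFaithful.ofFullyFaithful (shiftFunctor D n)).map_bijective X Y)

variable {K L : D} (p : K ⟶ L⟦(1 : ℤ)⟧) (Z : D)

/-- The connecting map `Hom(Z⟦1⟧, K) ⟶ Hom(Z, L)` induced by `p : K ⟶ L⟦1⟧`, as in the long exact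
sequence of a triangle `L ⟶ M ⟶ K ⟶ L⟦1⟧`. -/
noncomputable def connectingFrom : (Z⟦(1 : ℤ)⟧ ⟶ K) →ₗ[P] (Z ⟶ L) :=
  (homShiftEquiv P Z L 1).symm.toLinearMap ∘ₗ Linear.rightComp P _ p

/-- The connecting map `Hom(L, Z) ⟶ Hom(K, Z⟦1⟧)` induced by `p : K ⟶ L⟦1⟧`, as in the long exact
sequence of a triangle `L ⟶ M ⟶ K ⟶ L⟦1⟧`. -/
noncomputable def connectingTo : (L ⟶ Z) →ₗ[P] (K ⟶ Z⟦(1 : ℤ)⟧) :=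
  Linear.leftComp P _ p ∘ₗ (homShiftEquiv P L Z 1).toLinearMap

variable {P p Z}

lemma connectingFrom_eq_iff {a : Z⟦(1 : ℤ)⟧ ⟶ K} {b : Z ⟶ L} :
    connectingFrom P p Z a = b ↔ a ≫ p = b⟦(1 : ℤ)⟧' :=
  LinearEquiv.symm_apply_eq _

lemma connectingTo_apply (b : L ⟶ Z) : connectingTo P p Z b = p ≫ b⟦(1 : ℤ)⟧' := rfl

end ConnectingMaps

section Koszul

variable {D : Type*} [Category* D] [Preadditive D] [HasZeroObject D] [HasShift D ℤ]
  [∀ n : ℤ, (shiftFunctor D n).Additive] [Pretriangulated D]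
  {P : Type*} [CommRing P] [Linear P D] {S : Submonoid P} {x : P} {xs : List P}
  {L K Z : D} {δ : L ⟶ K} {p : K ⟶ L⟦(1 : ℤ)⟧}

lemma smul_eq_zero_of_distTriang (hT : Triangle.mk δ (x • 𝟙 K) p ∈ distTriang D) : x • δ = 0 := by
  have h : δ ≫ (x • 𝟙 K) = 0 := comp_distTriang_mor_zero₁₂ _ hT
  rwa [Linear.comp_smul, comp_id] at h

lemma isGhost_of_distTriang {Q : ObjectProperty D}
    (hT : Triangle.mk δ (x • 𝟙 K) p ∈ distTriang D)
    (hx : ∀ Z, Q Z → IsSMulRegular (LocalizedModule S (Z ⟶ K)) x) : IsGhost S Q δ := by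
  intro Z hZ a
  have h : x • LocalizedModule.mkLinearMap S _ (a ≫ δ) = 0 := by
    rw [← map_smul, ← Linear.comp_smul, smul_eq_zero_of_distTriang hT, comp_zero, map_zero]
  obtain ⟨s, hs⟩ := (IsLocalizedModule.eq_zero_iff S _).1 ((hx Z hZ).right_eq_zero_of_smul h)
  exact ⟨s, s.2, hs⟩

lemma exact_smul_leftComp (hT : Triangle.mk δ (x • 𝟙 K) p ∈ distTriang D) :
    Function.Exact (x • (LinearMap.id : (K ⟶ Z) →ₗ[P] _)) (Linear.leftComp P Z δ) := by
  intro f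
  constructor
  · intro hf
    obtain ⟨g, hg⟩ : ∃ g : K ⟶ Z, f = (x • 𝟙 K) ≫ g := Triangle.yoneda_exact₂ _ hT f hf
    exact ⟨g, by simpa using hg.symm⟩
  · rintro ⟨g, rfl⟩
    simp [← Linear.smul_comp, smul_eq_zero_of_distTriang hT]

variable [∀ n : ℤ, (shiftFunctor D n).Linear P]

lemma exact_leftComp_connectingTo (hT : Triangle.mk δ (x • 𝟙 K) p ∈ distTriang D) :
    Function.Exact (Linear.leftComp P Z δ) (connectingTo P p Z) := by
  intro b
  rw [connectingTo_apply]
  constructor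
  · intro hb
    obtain ⟨c, hc⟩ : ∃ c : K⟦(1 : ℤ)⟧ ⟶ Z⟦(1 : ℤ)⟧, b⟦(1 : ℤ)⟧' = -δ⟦(1 : ℤ)⟧' ≫ c := by
      obtain ⟨c, hc⟩ := Triangle.yoneda_exact₃ _ (rot_of_distTriang _ hT) (b⟦(1 : ℤ)⟧') hb
      exact ⟨c, hc.trans (Preadditive.neg_comp _ _)⟩
    obtain ⟨c, rfl⟩ := (shiftFunctor D (1 : ℤ)).map_surjective c
    refine ⟨-c, (shiftFunctor D (1 : ℤ)).map_injective ?_⟩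
    simp [hc]
  · rintro ⟨c, rfl⟩
    have hpδ : p ≫ δ⟦(1 : ℤ)⟧' = 0 := comp_distTriang_mor_zero₃₁ _ hT
    simp [reassoc_of% hpδ]

lemma smul_connectingTo_eq_zero (hT : Triangle.mk δ (x • 𝟙 K) p ∈ distTriang D) :
    x • connectingTo P p Z = 0 := by
  have hp : (x • 𝟙 K) ≫ p = 0 := comp_distTriang_mor_zero₂₃ _ hT
  rw [Linear.smul_comp, id_comp] at hp
  ext b
  rw [LinearMap.smul_apply, connectingTo_apply, ← Linear.smul_comp, hp, zero_comp,
    LinearMap.zero_apply]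

lemma exact_smul_connectingFrom (hT : Triangle.mk δ (x • 𝟙 K) p ∈ distTriang D) :
    Function.Exact (x • (LinearMap.id : (Z⟦(1 : ℤ)⟧ ⟶ K) →ₗ[P] _)) (connectingFrom P p Z) := by
  intro a
  rw [connectingFrom_eq_iff, Functor.map_zero]
  constructor
  · intro ha
    obtain ⟨g, hg⟩ : ∃ g : Z⟦(1 : ℤ)⟧ ⟶ K, a = g ≫ (x • 𝟙 K) := Triangle.coyoneda_exact₃ _ hT a ha
    exact ⟨g, by simpa using hg.symm⟩
  · rintro ⟨g, rfl⟩
    have hp : (x • 𝟙 K) ≫ p = 0 := comp_distTriang_mor_zero₂₃ _ hT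
    have hxg : x • g = g ≫ (x • 𝟙 K) := by rw [Linear.comp_smul, comp_id]
    rw [LinearMap.smul_apply, LinearMap.id_apply, hxg, assoc, hp, comp_zero]

lemma exact_connectingFrom_rightComp (hT : Triangle.mk δ (x • 𝟙 K) p ∈ distTriang D) :
    Function.Exact (connectingFrom P p Z) (Linear.rightComp P Z δ) := by
  intro b
  simp only [Set.mem_range, connectingFrom_eq_iff]
  constructor
  · intro hb
    have hb' : b⟦(1 : ℤ)⟧' ≫ δ⟦(1 : ℤ)⟧' = 0 := by
      rw [← Functor.map_comp]
      exact (congrArg _ hb).trans (Functor.map_zero ..)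
    obtain ⟨a, ha⟩ := Triangle.coyoneda_exact₁ _ hT (b⟦(1 : ℤ)⟧') hb'
    exact ⟨a, ha.symm⟩
  · rintro ⟨a, ha⟩
    have hpδ : p ≫ δ⟦(1 : ℤ)⟧' = 0 := comp_distTriang_mor_zero₃₁ _ hT
    refine (shiftFunctor D (1 : ℤ)).map_injective ?_
    simp [← reassoc_of% ha, hpδ]

lemma isWeaklyRegular_hom_from (hT : Triangle.mk δ (x • 𝟙 K) p ∈ distTriang D)
    (hK : IsWeaklyRegular (LocalizedModule S (Z ⟶ K)) (x :: xs))
    (hK' : IsWeaklyRegular (LocalizedModule S (Z⟦(1 : ℤ)⟧ ⟶ K)) (x :: xs)) :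
    IsWeaklyRegular (LocalizedModule S (Z ⟶ L)) xs :=
  isWeaklyRegular_of_surjective_of_ker (f := locMap S (connectingFrom P p Z))
    (locMap_surjective_of_exact (exact_connectingFrom_rightComp hT)
      (LinearMap.ext fun b ↦ by simp [← Linear.comp_smul, smul_eq_zero_of_distTriang hT])
      ((isWeaklyRegular_cons_iff ..).1 hK).1)
    (ker_locMap_of_exact (exact_smul_connectingFrom hT)) hK'

lemma locMap_leftComp_surjective (hT : Triangle.mk δ (x • 𝟙 K) p ∈ distTriang D)
    (hx : IsSMulRegular (LocalizedModule S (K ⟶ Z⟦(1 : ℤ)⟧)) x) :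
    Function.Surjective (locMap S (Linear.leftComp P Z δ)) :=
  locMap_surjective_of_exact (exact_leftComp_connectingTo hT) (smul_connectingTo_eq_zero hT) hx

end Koszul

section Tower

variable {D : Type*} [Category* D] [Preadditive D] [HasZeroObject D] [HasShift D ℤ]
  [∀ n : ℤ, (shiftFunctor D n).Additive] [Pretriangulated D]
  {P : Type*} [CommRing P] [Linear P D] [∀ n : ℤ, (shiftFunctor D n).Linear P]
  {S : Submonoid P} {Q Q' : ObjectProperty D} [Q.IsStableUnderShift ℤ] [Q'.IsStableUnderShift ℤ]

theorem exists_isGhostComp_mk_comp_ne_zero (rs : List P) {K Y : D} (hY : Q' Y)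
    (hQ : ∀ Z, Q Z → IsWeaklyRegular (LocalizedModule S (Z ⟶ K)) rs)
    (hQ' : ∀ Z, Q' Z → IsWeaklyRegular (LocalizedModule S (K ⟶ Z)) rs) (f : K ⟶ Y)
    (hf : LocalizedModule.mkLinearMap S (K ⟶ Y) f ∉
      Ideal.ofList rs • (⊤ : Submodule P (LocalizedModule S (K ⟶ Y)))) :
    ∃ (L : D) (h : L ⟶ K), IsGhostComp S Q rs.length h ∧
      LocalizedModule.mkLinearMap S (L ⟶ Y) (h ≫ f) ≠ 0 := by
  induction rs generalizing K with
  | nil => exact ⟨K, 𝟙 K, .zero _, by simpa using hf⟩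
  | cons x xs ih =>
    obtain ⟨L, δ, p, hT⟩ := distinguished_cocone_triangle₁ (x • 𝟙 K)
    have hQ'x Z (hZ : Q' Z) : IsSMulRegular (LocalizedModule S (K ⟶ Z⟦(1 : ℤ)⟧)) x :=
      ((isWeaklyRegular_cons_iff ..).1 (hQ' _ (Q'.le_shift 1 Z hZ))).1
    have hsurj Z (hZ : Q' Z) := locMap_leftComp_surjective hT (hQ'x Z hZ)
    have hker (Z : D) := ker_locMap_of_exact (S := S) (exact_smul_leftComp hT (Z := Z))
    have hδf : LocalizedModule.mkLinearMap S (L ⟶ Y) (δ ≫ f) ∉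
        Ideal.ofList xs • (⊤ : Submodule P (LocalizedModule S (L ⟶ Y))) := fun hmem ↦
      hf <| mem_ofList_cons_smul_top_of_surjective (hsurj Y hY) (hker Y) <| by
        rwa [IsLocalizedModule.map_apply]
    obtain ⟨L', h, hh, hne⟩ := ih
      (fun Z hZ ↦ isWeaklyRegular_hom_from hT (hQ Z hZ) (hQ _ (Q.le_shift 1 Z hZ)))
      (fun Z hZ ↦ isWeaklyRegular_of_surjective_of_ker (hsurj Z hZ) (hker Z) (hQ' Z hZ)) _ hδf
    exact ⟨L', h ≫ δ, hh.comp (isGhost_of_distTriang hT fun Z hZ ↦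
      ((isWeaklyRegular_cons_iff ..).1 (hQ Z hZ)).1), by rwa [assoc]⟩

end Tower

theorem length_lt_of_angleN_eq_univ {P : Type*} [CommRing P] [Linear P C]
    [∀ n : ℤ, (shiftFunctor C n).Linear P] {S : Submonoid P} {Q Q' : ObjectProperty C}
    [Q.IsStableUnderShift ℤ] [Q'.IsStableUnderShift ℤ] {H G : C} (hH : Q H) (hG : Q' G)
    {rs : List P}
    (hQ : ∀ Z, Q Z → IsWeaklyRegular (LocalizedModule S (Z ⟶ G)) rs)
    (hQ' : ∀ Z, Q' Z → IsWeaklyRegular (LocalizedModule S (G ⟶ Z)) rs)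
    (hrs : LocalizedModule.mkLinearMap S (G ⟶ G) (𝟙 G) ∉
      Ideal.ofList rs • (⊤ : Submodule P (LocalizedModule S (G ⟶ G))))
    {n : ℕ} (hn : angleN {H} n = Set.univ) : rs.length < n := by
  obtain ⟨L, h, hh, hne⟩ := exists_isGhostComp_mk_comp_ne_zero rs hG hQ hQ' (𝟙 G) hrs
  by_contra! hle
  obtain ⟨s, hs, hsh⟩ := annihilatesGhosts_of_mem_angleN hH n L (by simp [hn]) (hh.of_le hle)
  exact hne ((IsLocalizedModule.eq_zero_iff S _).2 ⟨⟨s, hs⟩, by rw [comp_id]; exact hsh⟩)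

section Periodicity

variable {D : Type*} [Category* D] [HasShift D ℤ]

variable (D) in
/-- The subgroup of those `n` for which the shift by `n` is isomorphic to the identity. -/
def shiftPeriods : AddSubgroup ℤ where
  carrier := {n | Nonempty (shiftFunctor D n ≅ 𝟭 D)}
  zero_mem' := ⟨shiftFunctorZero D ℤ⟩
  add_mem' := by
    rintro a b ⟨e⟩ ⟨e'⟩
    exact ⟨shiftFunctorAdd D a b ≪≫ Functor.isoWhiskerRight e _ ≪≫ Functor.leftUnitor _ ≪≫ e'⟩
  neg_mem' := by
    rintro a ⟨e⟩
    exact ⟨(Functor.leftUnitor _).symm ≪≫ Functor.isoWhiskerRight e.symm _ ≪≫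
      shiftFunctorCompIsoId D a (-a) (add_neg_cancel a)⟩

lemma nonempty_shift_iso_of_intCast_eq {m : ℕ} (hm : (m : ℤ) ∈ shiftPeriods D) {a b : ℤ}
    (hab : (a : ZMod m) = b) (Y : D) : Nonempty (Y⟦a⟧ ≅ Y⟦b⟧) := by
  obtain ⟨e⟩ : b - a ∈ shiftPeriods D := AddSubgroup.zmultiples_le_of_mem hm <|
    Int.mem_zmultiples_iff.2 ((ZMod.intCast_eq_intCast_iff_dvd_sub a b m).1 hab)
  exact ⟨(e.app (Y⟦a⟧)).symm ≪≫ (shiftFunctorAdd' D a (b - a) b (by lia)).symm.app Y⟩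

end Periodicity

/-- The class of objects isomorphic to a shift of `X`. -/
abbrev shiftsOf {D : Type*} [Category* D] [HasShift D ℤ] (X : D) : ObjectProperty D :=
  (ObjectProperty.singleton X).shiftClosure ℤ

lemma shiftsOf_self {D : Type*} [Category* D] [HasShift D ℤ] (X : D) : shiftsOf X X :=
  ObjectProperty.singleton_le_iff.1 (ObjectProperty.le_shiftClosure _)

section GradedHom

variable {D : Type*} [Category* D] [Preadditive D] [HasShift D ℤ]
  {P : Type*} [CommRing P] [Linear P D] {m : ℕ}

/-- The graded module of morphisms `⨁ i : ℤ/m, Hom(X, Y⟦i⟧)`, with the degrees represented by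
integers through `ZMod.cast`. It is the underlying type of `CentralAction.HomBullet`. -/
abbrev GradedHom (m : ℕ) (X Y : D) : Type _ := ⨁ i : ZMod m, (X ⟶ Y⟦(ZMod.cast i : ℤ)⟧)

variable (P) in
/-- Precomposition in every degree. -/
noncomputable def gradedPrecomp (m : ℕ) {X X' : D} (f : X ⟶ X') (Y : D) :
    GradedHom m X' Y →ₗ[P] GradedHom m X Y :=
  DirectSum.lmap fun _ ↦ Linear.leftComp P _ f

lemma exists_retract_gradedHom (hm : (m : ℤ) ∈ shiftPeriods D) (X : D) {Y Z : D}
    (hZ : shiftsOf Y Z) :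
    ∃ (i : (X ⟶ Z) →ₗ[P] GradedHom m X Y) (r : GradedHom m X Y →ₗ[P] (X ⟶ Z)),
      r ∘ₗ i = LinearMap.id := by
  obtain ⟨_, n, e, ⟨⟩⟩ := hZ
  obtain ⟨e'⟩ := nonempty_shift_iso_of_intCast_eq hm (a := n) (b := (n : ZMod m).cast) (by simp) Y
  let ε := Linear.homCongr P (.refl X) (e ≪≫ e')
  refine ⟨DirectSum.lof P (ZMod m) _ (n : ZMod m) ∘ₗ ε.toLinearMap,
    ε.symm.toLinearMap ∘ₗ DirectSum.component P (ZMod m) _ (n : ZMod m), ?_⟩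
  ext f : 1
  simp [DirectSum.component.lof_self]

lemma isNoetherian_hom_of_shiftsOf (hm : (m : ℤ) ∈ shiftPeriods D) {X Y Z : D}
    (hZ : shiftsOf Y Z) [IsNoetherian P (GradedHom m X Y)] : IsNoetherian P (X ⟶ Z) := by
  obtain ⟨i, r, hri⟩ := exists_retract_gradedHom (P := P) hm X hZ
  exact isNoetherian_of_injective i (LinearMap.injective_of_comp_eq_id i r hri)

lemma flat_localizedModule_hom_of_shiftsOf_right {S : Submonoid P} (hm : (m : ℤ) ∈ shiftPeriods D)
    {X Y Z : D} (hZ : shiftsOf Y Z) [Module.Flat P (LocalizedModule S (GradedHom m X Y))] :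
    Module.Flat P (LocalizedModule S (X ⟶ Z)) := by
  obtain ⟨i, r, hri⟩ := exists_retract_gradedHom (P := P) hm X hZ
  exact flat_localizedModule_of_retract S i r hri

lemma isNoetherian_gradedHom_of_isSummand {X X' Y : D} (h : IsSummand X X')
    [IsNoetherian P (GradedHom m X' Y)] : IsNoetherian P (GradedHom m X Y) := by
  obtain ⟨r, k, hrk⟩ := h
  refine isNoetherian_of_injective (gradedPrecomp P m k Y) ?_
  refine (DirectSum.lmap_injective _).2 fun _ ↦ Function.LeftInverse.injective (g := (r ≫ ·)) ?_
  exact fun f ↦ by simp [reassoc_of% hrk]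

lemma isNoetherian_gradedHom_of_distTriang [HasZeroObject D]
    [∀ n : ℤ, (shiftFunctor D n).Additive] [Pretriangulated D] {Y : D} {T : Triangle D}
    (hT : T ∈ distTriang D) [IsNoetherian P (GradedHom m T.obj₁ Y)]
    [IsNoetherian P (GradedHom m T.obj₃ Y)] : IsNoetherian P (GradedHom m T.obj₂ Y) := by
  refine isNoetherian_of_range_eq_ker (gradedPrecomp P m T.mor₂ Y) (gradedPrecomp P m T.mor₁ Y) ?_
  have exact_degree (i : ZMod m) :
      LinearMap.range (Linear.leftComp P (Y⟦(i.cast : ℤ)⟧) T.mor₂) =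
        LinearMap.ker (Linear.leftComp P (Y⟦(i.cast : ℤ)⟧) T.mor₁) := by
    refine (LinearMap.exact_iff.1 fun f ↦ ⟨fun hf ↦ ?_, ?_⟩).symm
    · obtain ⟨g, rfl⟩ := Triangle.yoneda_exact₂ T hT f hf
      exact ⟨g, rfl⟩
    · rintro ⟨g, rfl⟩
      simp [comp_distTriang_mor_zero₁₂_assoc T hT]
  rw [gradedPrecomp, gradedPrecomp, DirectSum.range_lmap, DirectSum.ker_lmap]
  simp only [exact_degree]

variable [∀ n : ℤ, (shiftFunctor D n).Additive] [∀ n : ℤ, (shiftFunctor D n).Linear P]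

variable (P) in
/-- The adjunction between the shifts by `n` and `-n`, on modules of morphisms. -/
noncomputable def homShiftNegEquiv (X Y : D) (n : ℤ) : (X⟦n⟧ ⟶ Y) ≃ₗ[P] (X ⟶ Y⟦-n⟧) :=
  homShiftEquiv P (X⟦n⟧) Y (-n) ≪≫ₗ Linear.homCongr P (shiftShiftNeg X n) (.refl _)

lemma nonempty_gradedHom_shift_equiv (hm : (m : ℤ) ∈ shiftPeriods D) (X Y : D) (n : ℤ) :
    Nonempty (GradedHom m X Y ≃ₗ[P] GradedHom m (X⟦n⟧) Y) := by
  let shiftIndex : ZMod m ≃ ZMod m := Equiv.addRight (n : ZMod m)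
  have e (i : ZMod m) : Nonempty ((X ⟶ Y⟦((shiftIndex.symm i).cast : ℤ)⟧) ≃ₗ[P]
      (X⟦n⟧ ⟶ Y⟦(i.cast : ℤ)⟧)) := by
    obtain ⟨e⟩ := nonempty_shift_iso_of_intCast_eq hm (a := (shiftIndex.symm i).cast)
      (b := i.cast + -n) (by simp [shiftIndex]) Y
    exact ⟨Linear.homCongr P (.refl X) (e ≪≫ (shiftFunctorAdd D _ _).app Y) ≪≫ₗ
      (homShiftNegEquiv P X _ n).symm⟩
  exact ⟨DirectSum.lequivCongrLeft P shiftIndex ≪≫ₗ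
    DirectSum.congrLinearEquiv fun i ↦ (e i).some⟩

lemma flat_localizedModule_hom_of_shiftsOf_left {S : Submonoid P} (hm : (m : ℤ) ∈ shiftPeriods D)
    {X Y Z : D} (hZ : shiftsOf X Z) [Module.Flat P (LocalizedModule S (GradedHom m X Y))] :
    Module.Flat P (LocalizedModule S (Z ⟶ Y)) := by
  obtain ⟨_, n, e, ⟨⟩⟩ := hZ
  have : Module.Flat P (LocalizedModule S (X ⟶ Y⟦-n⟧)) :=
    flat_localizedModule_hom_of_shiftsOf_right hm
      (ObjectProperty.le_shift _ (-n) _ (shiftsOf_self Y))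
  let ε := Linear.homCongr P e (.refl Y) ≪≫ₗ homShiftNegEquiv P X Y n
  exact flat_localizedModule_of_retract S ε.toLinearMap ε.symm.toLinearMap ε.symm_comp

end GradedHom

lemma isNoetherian_gradedHom_of_mem_angleN {P : Type*} [CommRing P] [Linear P C]
    [∀ n : ℤ, (shiftFunctor C n).Linear P] {m : ℕ} (hm : (m : ℤ) ∈ shiftPeriods C) {G Y : C}
    [IsNoetherian P (GradedHom m G Y)] {n : ℕ} {X : C} (hX : X ∈ angleN {G} n) :
    IsNoetherian P (GradedHom m X Y) := by
  refine angleN_induction (p := fun X ↦ IsNoetherian P (GradedHom m X Y))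
    inferInstance ?_ ?_ ?_ ?_ hX
  · intro X hX
    have (i : ZMod m) : Subsingleton (X ⟶ Y⟦(i.cast : ℤ)⟧) := ⟨hX.eq_of_src⟩
    infer_instance
  · intro X n _
    exact isNoetherian_of_linearEquiv (nonempty_gradedHom_shift_equiv hm X Y n).some
  · intro X X' h _
    exact isNoetherian_gradedHom_of_isSummand h
  · intro T hT _ _
    exact isNoetherian_gradedHom_of_distTriang hT

lemma mk_id_notMem_smul_top {D : Type*} [Category* D] [Preadditive D] {P : Type*} [CommRing P]
    [Linear P D] {G : D} [Module.Finite P (End G)] [FaithfulSMul P (End G)] {g : P} {I : Ideal P}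
    (hg : g ∉ I.radical) : LocalizedModule.mkLinearMap (.powers g) (G ⟶ G) (𝟙 G) ∉
      I • (⊤ : Submodule P (LocalizedModule (.powers g) (G ⟶ G))) := by
  intro h
  obtain ⟨_, ⟨n, rfl⟩, hn⟩ := exists_mem_radical_of_mk_one_mem (End G) h
  exact hg (Ideal.radical_isRadical I ⟨n, hn⟩)

section RegularAction

variable {P : Type*} [CommRing P] [Linear P C] [∀ n : ℤ, (shiftFunctor C n).Linear P]
  [IsDomain P] [IsNoetherianRing P] {m d n : ℕ} {G H : C}

theorem lt_of_angleN_eq_univ (hP : HasAvoidingSequence d P) (hm : (m : ℤ) ∈ shiftPeriods C)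
    [FaithfulSMul P (End G)] [IsNoetherian P (GradedHom m G G)] (hG : IsSplitGenerator G)
    (hH : angleN {H} n = Set.univ) : d < n := by
  obtain ⟨k, hk⟩ := hG
  have : IsNoetherian P (GradedHom m H G) :=
    isNoetherian_gradedHom_of_mem_angleN hm (hk ▸ Set.mem_univ H)
  obtain ⟨g, hg, hflat⟩ := exists_ne_zero_flat_localizedModule_powers P
    (GradedHom m H G × GradedHom m G G)
  have := flat_localizedModule_of_retract (.powers g) _ _
    (LinearMap.fst_comp_inl P (GradedHom m H G) (GradedHom m G G))
  have := flat_localizedModule_of_retract (.powers g) _ _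
    (LinearMap.snd_comp_inr P (GradedHom m H G) (GradedHom m G G))
  obtain ⟨rs, rfl, hrs, hgrs⟩ := hP g (by rwa [isNilpotent_iff_eq_zero])
  have : IsNoetherian P (End G) := isNoetherian_hom_of_shiftsOf hm (shiftsOf_self G)
  refine length_lt_of_angleN_eq_univ (shiftsOf_self H) (shiftsOf_self G)
    (fun Z hZ ↦ ?_) (fun Z hZ ↦ ?_) (mk_id_notMem_smul_top hgrs) hH
  · have := flat_localizedModule_hom_of_shiftsOf_left (P := P) (S := .powers g) (Y := G) hm hZ
    exact isWeaklyRegular_of_flat hrs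
  · have := flat_localizedModule_hom_of_shiftsOf_right (P := P) (S := .powers g) (X := G) hm hZ
    exact isWeaklyRegular_of_flat hrs

theorem le_rouquierDim (hP : HasAvoidingSequence d P) (hm : (m : ℤ) ∈ shiftPeriods C)
    [FaithfulSMul P (End G)] [IsNoetherian P (GradedHom m G G)] (hG : IsSplitGenerator G) :
    (d : ℕ∞) ≤ rouquierDim C := by
  refine le_sInf ?_
  rintro _ ⟨n, rfl, H, hH⟩
  exact_mod_cast Nat.lt_succ_iff.1 (lt_of_angleN_eq_univ hP hm hG hH)

end RegularAction

section NoetherNormalization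

lemma ringKrullDim_le_of_isIntegral {A B : Type*} [CommRing A] [CommRing B] {f : A →+* B}
    (hf : f.IsIntegral) : ringKrullDim B ≤ ringKrullDim A := by
  algebraize [f]
  exact Order.krullDim_le_of_strictMono (PrimeSpectrum.comap (algebraMap A B))
    fun I J hIJ ↦ Ideal.IsIntegral.comap_lt_comap (I := I.asIdeal) (J := J.asIdeal) hIJ

lemma exists_ringHom_mvPolynomial_finite_injective (k : Type*) {R : Type*} [Field k] [CommRing R]
    [Algebra k R] [Algebra.FiniteType k R] {J : Ideal R} (hJ : J ≠ ⊤) :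
    ∃ (d : ℕ) (f : MvPolynomial (Fin d) k →+* R),
      ((Ideal.Quotient.mk J).comp f).Finite ∧
        Function.Injective ((Ideal.Quotient.mk J).comp f) := by
  have : Nontrivial (R ⧸ J) := Ideal.Quotient.nontrivial_iff.2 hJ
  obtain ⟨d, q, hq, hfin⟩ := exists_finite_inj_algHom_of_fg k (R ⧸ J)
  choose y hy using fun i ↦ Ideal.Quotient.mk_surjective (q (MvPolynomial.X i))
  have hyq : (Ideal.Quotient.mkₐ k J).comp (MvPolynomial.aeval y) = q :=
    MvPolynomial.algHom_ext fun i ↦ by simpa using hy i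
  subst hyq
  exact ⟨d, (MvPolynomial.aeval (R := k) y).toRingHom, hfin, hq⟩

lemma ringKrullDim_le_of_finite_mvPolynomial {k B : Type*} [Field k] [CommRing B] {d : ℕ}
    {f : MvPolynomial (Fin d) k →+* B} (hf : f.Finite) : ringKrullDim B ≤ d := by
  simpa [MvPolynomial.ringKrullDim_of_isNoetherianRing] using
    ringKrullDim_le_of_isIntegral hf.to_isIntegral

lemma finite_of_quotient_annihilator_finite {P R N : Type*} [CommRing P] [CommRing R]
    [AddCommGroup N] [Module R N] [Module P N] {f : P →+* R}
    (hf : ((Ideal.Quotient.mk (Module.annihilator R N)).comp f).Finite)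
    (hsmul : ∀ (p : P) (x : N), p • x = f p • x) [Module.Finite R N] : Module.Finite P N := by
  have htors : Module.IsTorsionBySet R N (Module.annihilator R N) :=
    Module.isTorsionBySet_annihilator R N
  let : Module (R ⧸ Module.annihilator R N) N := htors.module
  have : IsScalarTower R (R ⧸ Module.annihilator R N) N := htors.isScalarTower
  have : Module.Finite (R ⧸ Module.annihilator R N) N := .of_restrictScalars_finite R _ _
  algebraize [(Ideal.Quotient.mk (Module.annihilator R N)).comp f]
  have : IsScalarTower P (R ⧸ Module.annihilator R N) N :=
    .of_algebraMap_smul fun p x ↦ (hsmul p x).symm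
  exact .trans (R ⧸ Module.annihilator R N) N

end NoetherNormalization

section CentralAction

variable {D : Type*} [Category* D] [Preadditive D] [HasShift D ℤ]

/-- The linear structure on the category defined by a central action, so that the theory of linear
categories applies. -/
abbrev CentralAction.linear (A : CentralAction (C := D) R) : Linear R D where
  homModule := A.homModule
  smul_comp X Y Z r f g := by
    change (f ≫ A.φ Y r) ≫ g = (f ≫ g) ≫ A.φ Z r
    rw [assoc, A.natural, assoc]
  comp_smul X Y Z f r g := (assoc f g (A.φ Z r)).symm

lemma CentralAction.shiftFunctor_linear (A : CentralAction (C := D) R) (n : ℤ) :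
    letI := A.linear
    (shiftFunctor D n).Linear R :=
  let := A.linear
  { map_smul := fun f r ↦ by
      change (f ≫ A.φ _ r)⟦n⟧' = f⟦n⟧' ≫ A.φ _ r
      rw [Functor.map_comp, A.shift_comm] }

/-- Restriction of a central action along a ring homomorphism. -/
def CentralAction.restrict {P : Type*} [CommRing P] (A : CentralAction (C := D) R) (f : P →+* R) :
    CentralAction (C := D) P where
  φ K := (A.φ K).comp f
  natural g r := A.natural g (f r)
  shift_comm K r := A.shift_comm K (f r)

lemma CentralAction.mem_annihilator_homBullet (A : CentralAction (C := D) R) (m : ℕ) {X Y : D}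
    {r : R} (hr : A.φ X r = 0) : r ∈ Module.annihilator R (A.HomBullet m X Y) := by
  refine Module.mem_annihilator.2 fun x : ⨁ i : ZMod m, (X ⟶ Y⟦(ZMod.cast i : ℤ)⟧) ↦
    DFinsupp.ext fun i ↦ ?_
  change x i ≫ A.φ _ r = 0
  rw [← A.natural, hr, zero_comp]

lemma CentralAction.finite_restrict_homBullet {P : Type*} [CommRing P]
    (A : CentralAction (C := D) R) (m : ℕ) (X Y : D) [Module.Finite R (A.HomBullet m X Y)]
    {f : P →+* R}
    (hf : ((Ideal.Quotient.mk (Module.annihilator R (A.HomBullet m X Y))).comp f).Finite) :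
    Module.Finite P ((A.restrict f).HomBullet m X Y) := by
  let : Module P (A.HomBullet m X Y) := ((A.restrict f).HomBullet m X Y).isModule
  exact finite_of_quotient_annihilator_finite (N := A.HomBullet m X Y) hf fun _ _ ↦ rfl

lemma CentralAction.faithfulSMul_restrict {P : Type*} [CommRing P]
    (A : CentralAction (C := D) R) (m : ℕ) (X Y : D) {f : P →+* R}
    (hf : Function.Injective
      ((Ideal.Quotient.mk (Module.annihilator R (A.HomBullet m X Y))).comp f)) :
    letI := (A.restrict f).linear
    FaithfulSMul P (End X) := by
  let := (A.restrict f).linear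
  rw [faithfulSMul_iff_algebraMap_injective, injective_iff_map_eq_zero]
  intro p hp
  have hφ : A.φ X (f p) = 0 := by
    rw [← hp, Algebra.algebraMap_eq_smul_one]
    exact (id_comp _).symm
  exact (injective_iff_map_eq_zero _).1 hf p
    (Ideal.Quotient.eq_zero_iff_mem.2 (A.mem_annihilator_homBullet m hφ))

end CentralAction

/-- Let `C` be a `ℤ/m`-graded triangulated category (`1 ≤ m ≤ ∞`; here
`m = 0` encodes `m = ∞`), `k` a field, and `R` a commutative `k`-algebra of finite type
acting centrally on `C`. If there is a split-generator `G` of `C` such that `Hom^•(G, G)`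
is a Noetherian `R`-module, then `rdim C ≥ dim_R Hom^•(G, G)`, the Krull dimension of the
`R`-module `Hom^•(G, G)`. -/
theorem krullDim_le_rouquierDim
    (k : Type*) [Field k] [Algebra k R] [Algebra.FiniteType k R]
    (A : CentralAction (C := C) R) (m : ℕ)
    (hgr : Nonempty (shiftFunctor C (m : ℤ) ≅ 𝟭 C))
    (G : C) (hG : IsSplitGenerator G)
    (hN : IsNoetherian R (A.HomBullet m G G)) :
    ringKrullDim (R ⧸ Module.annihilator R (A.HomBullet m G G))
      ≤ (rouquierDim C : WithBot ℕ∞) := by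
  rcases eq_or_ne (Module.annihilator R (A.HomBullet m G G)) ⊤ with hJ | hJ
  · have : Subsingleton (R ⧸ _) := Ideal.Quotient.subsingleton_iff.2 hJ
    exact ringKrullDim_eq_bot_of_subsingleton.trans_le bot_le
  obtain ⟨d, f, hfin, hinj⟩ := exists_ringHom_mvPolynomial_finite_injective k hJ
  let := (A.restrict f).linear
  have := (A.restrict f).shiftFunctor_linear
  have := A.faithfulSMul_restrict m G G hinj
  have : IsNoetherian (MvPolynomial (Fin d) k) (GradedHom m G G) :=
    have := A.finite_restrict_homBullet m G G hfin
    inferInstanceAs (IsNoetherian _ ((A.restrict f).HomBullet m G G))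
  exact (ringKrullDim_le_of_finite_mvPolynomial hfin).trans
    (WithBot.coe_le_coe.2 (le_rouquierDim (hasAvoidingSequence_mvPolynomial (A := k) d) hgr hG))

end RouquierDim
end

section
/- Let R be an algebra of finite type over a field k which is equidimensional, i.e. dim(R/𝔭) = dim R for every minimal prime 𝔭 of R. Let 𝔭 be a minimal prime of R and let f ∈ R with f ∉ 𝔭. Then the Krull dimension of R equals the Krull dimension of the localization R_f of R away from f. -/
/-!
Every chain of primes of `R_f` contracts to a chain in `R`, so `dim R_f ≤ dim R`. Conversely,
`R_f` surjects onto the localization of the domain `R ⧸ 𝔭` at the nonzero class of `f`. By Noether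
normalization the dimension of a finitely generated domain over `k` is its transcendence degree,
which does not change upon inverting a nonzero element; hence `dim R_f ≥ dim (R ⧸ 𝔭) = dim R`.
-/

section Integral

variable (A B : Type*) [CommRing A] [CommRing B] [Algebra A B]

theorem ringKrullDim_le_of_isIntegral [Algebra.IsIntegral A B] :
    ringKrullDim B ≤ ringKrullDim A :=
  Order.krullDim_le_of_strictMono (PrimeSpectrum.comap (algebraMap A B))
    fun _ _ hlt ↦ Ideal.IsIntegral.comap_lt_comap (R := A) hlt

variable {A B} in
theorem ringKrullDim_le_of_comap_surjective_of_hasGoingUp [Algebra.HasGoingUp A B]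
    (hsurj : Function.Surjective (PrimeSpectrum.comap (algebraMap A B))) :
    ringKrullDim A ≤ ringKrullDim B := by
  refine iSup_le fun chain ↦ ?_
  obtain ⟨Q, hQ⟩ := hsurj chain.head
  have : Q.asIdeal.LiesOver chain.head.asIdeal := ⟨congrArg PrimeSpectrum.asIdeal hQ.symm⟩
  obtain ⟨lifted, hlength, -⟩ := Ideal.exists_ltSeries_of_hasGoingUp chain Q.asIdeal
  rw [← hlength]
  exact Order.LTSeries.length_le_krullDim lifted

theorem ringKrullDim_eq_of_isIntegral [Algebra.IsIntegral A B] [FaithfulSMul A B] :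
    ringKrullDim A = ringKrullDim B :=
  le_antisymm
    (ringKrullDim_le_of_comap_surjective_of_hasGoingUp (Algebra.IsIntegral.comap_surjective A B))
    (ringKrullDim_le_of_isIntegral A B)

end Integral

section Transcendence

universe u v w

variable (k : Type u) (A : Type v) (B : Type w) [CommRing k] [CommRing A] [CommRing B]
  [NoZeroDivisors B] [Algebra k A] [Algebra k B] [Algebra A B] [IsScalarTower k A B]
  [FaithfulSMul k A] [FaithfulSMul A B] [Algebra.IsAlgebraic A B]

theorem lift_trdeg_eq_of_isAlgebraic :
    Cardinal.lift.{w} (Algebra.trdeg k A) = Cardinal.lift.{v} (Algebra.trdeg k B) := by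
  have : Nontrivial A := Algebra.IsAlgebraic.nontrivial A B
  have : Nontrivial k := (algebraMap k A).domain_nontrivial
  rw [← lift_trdeg_add_eq k A B, trdeg_eq_zero (R := A), Cardinal.lift_zero, add_zero]

theorem toENat_trdeg_eq_of_isAlgebraic :
    (Algebra.trdeg k A).toENat = (Algebra.trdeg k B).toENat := by
  simpa only [Cardinal.toENat_lift] using
    congrArg Cardinal.toENat (lift_trdeg_eq_of_isAlgebraic k A B)

end Transcendence

section FiniteType

variable (k : Type*) [Field k]

theorem ringKrullDim_eq_toENat_trdeg (A : Type*) [CommRing A] [IsDomain A] [Algebra k A]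
    [Algebra.FiniteType k A] : ringKrullDim A = (Algebra.trdeg k A).toENat := by
  obtain ⟨n, g, hinj, hint⟩ := exists_integral_inj_algHom_of_fg k A
  algebraize [g.toRingHom]
  have : FaithfulSMul (MvPolynomial (Fin n) k) A :=
    (faithfulSMul_iff_algebraMap_injective _ _).mpr hinj
  have : Algebra.IsIntegral (MvPolynomial (Fin n) k) A := ⟨hint⟩
  rw [← ringKrullDim_eq_of_isIntegral (MvPolynomial (Fin n) k) A,
    ← toENat_trdeg_eq_of_isAlgebraic k (MvPolynomial (Fin n) k) A]
  simp [ringKrullDim_eq_zero_of_field]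

theorem ringKrullDim_eq_of_isAlgebraic (A B : Type*) [CommRing A] [CommRing B] [IsDomain B]
    [Algebra k A] [Algebra k B] [Algebra A B] [IsScalarTower k A B]
    [Algebra.FiniteType k A] [Algebra.FiniteType k B] [FaithfulSMul A B]
    [Algebra.IsAlgebraic A B] : ringKrullDim A = ringKrullDim B := by
  have : IsDomain A := (FaithfulSMul.algebraMap_injective A B).isDomain (algebraMap A B)
  rw [ringKrullDim_eq_toENat_trdeg k A, ringKrullDim_eq_toENat_trdeg k B,
    toENat_trdeg_eq_of_isAlgebraic k A B]

theorem ringKrullDim_eq_of_isLocalization_away_of_isDomain {A : Type*} (B : Type*) [CommRing A]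
    [IsDomain A] [CommRing B] [Algebra k A] [Algebra.FiniteType k A] [Algebra A B] {f : A}
    [IsLocalization.Away f B] (hf : f ≠ 0) : ringKrullDim A = ringKrullDim B := by
  have hpowers : Submonoid.powers f ≤ nonZeroDivisors A :=
    powers_le_nonZeroDivisors_of_noZeroDivisors hf
  have : IsDomain B := IsLocalization.isDomain_of_le_nonZeroDivisors B hpowers
  have : FaithfulSMul A B :=
    (faithfulSMul_iff_algebraMap_injective A B).mpr (IsLocalization.injective B hpowers)
  have : Algebra.IsAlgebraic A B := IsLocalization.isAlgebraic B (Submonoid.powers f)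
  let : Algebra k B := Algebra.compHom B (algebraMap k A)
  have : IsScalarTower k A B := .of_algebraMap_eq fun _ ↦ rfl
  have : Algebra.FiniteType k B :=
    .trans ‹_› (IsLocalization.finiteType_of_monoid_fg (Submonoid.powers f) B)
  exact ringKrullDim_eq_of_isAlgebraic k A B

end FiniteType

theorem ringKrullDim_le_of_isLocalization {R : Type*} (S : Type*) [CommRing R] [CommRing S]
    [Algebra R S] (M : Submonoid R) [IsLocalization M S] : ringKrullDim S ≤ ringKrullDim R :=
  Order.krullDim_le_of_strictMono (PrimeSpectrum.comap (algebraMap R S)) <|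
    Monotone.strictMono_of_injective (fun _ _ hle ↦ Ideal.comap_mono hle)
      (PrimeSpectrum.localization_comap_injective S M)

theorem ringKrullDim_quotient_le_of_isLocalization_away (k : Type*) {R : Type*} (S : Type*)
    [Field k] [CommRing R] [CommRing S] [Algebra k R] [Algebra.FiniteType k R] [Algebra R S]
    {p : Ideal R} [p.IsPrime] {f : R} [IsLocalization.Away f S] (hf : f ∉ p) :
    ringKrullDim (R ⧸ p) ≤ ringKrullDim S := by
  let fbar : R ⧸ p := Ideal.Quotient.mk p f
  have hfbar : fbar ≠ 0 := by rwa [Ne, Ideal.Quotient.eq_zero_iff_mem]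
  have hsurj : Function.Surjective
      (IsLocalization.Away.map S (Localization.Away fbar) (Ideal.Quotient.mk p) f) := by
    refine (IsLocalization.Away.map_surjective_iff _ _ _ _).mpr fun a ↦ ?_
    obtain ⟨b, rfl⟩ := Ideal.Quotient.mk_surjective a
    exact ⟨b, 0, by rw [pow_zero, one_mul]⟩
  calc ringKrullDim (R ⧸ p)
      = ringKrullDim (Localization.Away fbar) :=
        ringKrullDim_eq_of_isLocalization_away_of_isDomain k _ hfbar
    _ ≤ ringKrullDim S := ringKrullDim_le_of_surjective _ hsurj

theorem ringKrullDim_eq_ringKrullDim_away_general (k : Type*) {R : Type*} (S : Type*) [Field k]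
    [CommRing R] [CommRing S] [Algebra k R] [Algebra.FiniteType k R] [Algebra R S] {p : Ideal R}
    [p.IsPrime] {f : R} [IsLocalization.Away f S]
    (hdim : ringKrullDim (R ⧸ p) = ringKrullDim R) (hf : f ∉ p) :
    ringKrullDim R = ringKrullDim S :=
  le_antisymm (hdim ▸ ringKrullDim_quotient_le_of_isLocalization_away k S hf)
    (ringKrullDim_le_of_isLocalization S (Submonoid.powers f))

/-- Let `R` be an equidimensional algebra of finite type over a field `k`,
let `𝔭` be a minimal prime of `R` and `f ∈ R` with `f ∉ 𝔭`. Then the Krull dimension of `R`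
equals the Krull dimension of the localization `R_f`. -/
theorem ringKrullDim_eq_ringKrullDim_away
    (k R : Type*) [Field k] [CommRing R] [Algebra k R] [Algebra.FiniteType k R]
    (hequi : ∀ q ∈ minimalPrimes R, ringKrullDim (R ⧸ q) = ringKrullDim R)
    (p : Ideal R) (hp : p ∈ minimalPrimes R) (f : R) (hf : f ∉ p) :
    ringKrullDim R = ringKrullDim (Localization.Away f) :=
  have : p.IsPrime := hp.1.1
  ringKrullDim_eq_ringKrullDim_away_general k (Localization.Away f) (hequi p hp) hf
end

section
/- Let R be an algebra of finite type over a field k and let M be a finitely generated R-module of Krull dimension c ≥ 0. Then there exists an M-regular sequence x_1, …, x_c of elements of R of length c. -/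
/-!
By Noether normalization, `M` is a finite faithful module over a polynomial ring in at least `c`
variables over `k`, so it suffices to treat such modules. Regard `K[X₀, …, Xₙ]` as a polynomial
ring in `n` variables over `K[X₀]`. Since `K[X₀]` has infinitely many maximal ideals and `M` only
finitely many associated primes, some `g` generating a maximal ideal of `K[X₀]` avoids all of them,
so that `g` is `M`-regular. Moreover `K[X₀, …, Xₙ] / (g)` is a polynomial ring in `n` variables over
the field `K[X₀] / (g)`, and `M / gM` is faithful over it because `(g)` is a prime in the support
of `M`. Induction on the number of variables concludes.
-/

open RingTheory.Sequence

section MaximalIdeals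

variable {R : Type*} [CommRing R]

theorem infinite_setOfPred_isMaximal_of_isJacobsonRing [IsDomain R] [IsJacobsonRing R]
    (hR : ¬ IsField R) : {m : Ideal R | m.IsMaximal}.Infinite := by
  intro hfin
  have hinf : hfin.toFinset.inf id ≤ (⊥ : Ideal R) := by
    have hjac : (⊥ : Ideal R).jacobson = ⊥ :=
      IsJacobsonRing.out ‹_› (Ideal.isPrime_bot (α := R)).isRadical
    simpa [Finset.inf_id_eq_sInf, Ideal.jacobson] using hjac
  obtain ⟨m, hm, hle⟩ := (Ideal.IsPrime.inf_le' Ideal.isPrime_bot).mp hinf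
  rw [hfin.mem_toFinset, Set.mem_ofPred_eq] at hm
  exact hR (Ring.isField_iff_maximal_bot.mpr (le_bot_iff.mp hle ▸ hm))

theorem exists_isMaximal_span_singleton_forall_notMem [IsPrincipalIdealRing R]
    (hR : {m : Ideal R | m.IsMaximal}.Infinite) {A : Set (Ideal R)} (hA : A.Finite)
    (hne : ∀ q ∈ A, q ≠ ⊤) : ∃ g : R, (Ideal.span {g}).IsMaximal ∧ ∀ q ∈ A, g ∉ q := by
  obtain ⟨m, hm, hmA⟩ := hR.exists_notMem_finite hA
  obtain ⟨g, rfl⟩ := IsPrincipalIdealRing.principal m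
  refine ⟨g, hm, fun q hq hgq ↦ hmA ?_⟩
  have hle : Ideal.span {g} ≤ q := (Ideal.span_singleton_le_iff_mem q).mpr hgq
  exact Ideal.IsMaximal.eq_of_le hm (hne q hq) hle ▸ hq

end MaximalIdeals

theorem ringKrullDim_le_of_isIntegral_s9 (R S : Type*) [CommRing R] [CommRing S] [Algebra R S]
    [Algebra.IsIntegral R S] : ringKrullDim S ≤ ringKrullDim R :=
  Order.krullDim_le_of_strictMono (PrimeSpectrum.comap (algebraMap R S))
    fun _ _ hpq ↦ Ideal.IsIntegral.comap_lt_comap hpq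

theorem ringKrullDim_le_card_of_isIntegral_mvPolynomial (σ K S : Type*) [Finite σ] [Field K]
    [CommRing S] [Algebra (MvPolynomial σ K) S] [Algebra.IsIntegral (MvPolynomial σ K) S] :
    ringKrullDim S ≤ Nat.card σ := by
  simpa only [MvPolynomial.ringKrullDim_of_isNoetherianRing, ringKrullDim_eq_zero_of_field,
    zero_add] using ringKrullDim_le_of_isIntegral_s9 (MvPolynomial σ K) S

theorem nontrivial_of_faithfulSMul (R M : Type*) [Nontrivial R] [SMul R M] [FaithfulSMul R M] :
    Nontrivial M := by
  rw [← not_subsingleton_iff_nontrivial]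
  intro hM
  obtain ⟨a, b, hab⟩ := exists_pair_ne R
  exact hab (eq_of_smul_eq_smul fun _ : M ↦ Subsingleton.elim _ _)

section Modules

variable {R M : Type*} [CommRing R] [AddCommGroup M] [Module R M]

theorem isSMulRegular_of_forall_notMem_associatedPrimes [IsNoetherianRing R] {x : R}
    (hx : ∀ p ∈ associatedPrimes R M, x ∉ p) : IsSMulRegular M x := by
  have hmem : x ∉ ⋃ p ∈ associatedPrimes R M, (p : Set R) := by simpa using hx
  rwa [biUnion_associatedPrimes_eq_compl_regular, Set.notMem_compl_iff] at hmem

theorem annihilator_quotSMulTop_le [Module.Finite R M] {x : R} {p : Ideal R} [hp : p.IsPrime]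
    (hann : Module.annihilator R M ≤ p) (hx : x ∈ p) :
    Module.annihilator R (QuotSMulTop x M) ≤ p := by
  have hsupp : (⟨p, hp⟩ : PrimeSpectrum R) ∈ Module.support R (QuotSMulTop x M) := by
    rw [Module.support_quotSMulTop]
    exact ⟨Module.mem_support_iff_of_finite.mpr hann, by simpa using hx⟩
  exact Module.mem_support_iff_of_finite.mp hsupp

theorem faithfulSMul_quotient_quotSMulTop [Module.Finite R M] [FaithfulSMul R M] {x : R}
    [(Ideal.span {x}).IsPrime] : FaithfulSMul (R ⧸ Ideal.span {x}) (QuotSMulTop x M) := by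
  rw [← Module.annihilator_eq_bot, eq_bot_iff]
  intro s hs
  obtain ⟨r, rfl⟩ := Ideal.Quotient.mk_surjective s
  have hr : r ∈ Module.annihilator R (QuotSMulTop x M) := by
    rw [Module.mem_annihilator] at hs ⊢
    exact fun y ↦ (algebraMap_smul (R ⧸ Ideal.span {x}) r y).symm.trans (hs y)
  have hann : Module.annihilator R M ≤ Ideal.span {x} :=
    (Module.annihilator_eq_bot.mpr inferInstance).trans_le bot_le
  exact Ideal.Quotient.eq_zero_iff_mem.mpr
    (annihilator_quotSMulTop_le hann (Ideal.mem_span_singleton_self x) hr)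

theorem isRegular_take {rs : List R} (h : IsRegular M rs) (n : ℕ) : IsRegular M (rs.take n) where
  toIsWeaklyRegular := by
    have hsplit := h.toIsWeaklyRegular
    rw [← List.take_append_drop n rs, isWeaklyRegular_append_iff] at hsplit
    exact hsplit.1
  top_ne_smul := by
    have hle : Ideal.ofList (rs.take n) ≤ Ideal.ofList rs :=
      Ideal.span_mono fun _ ↦ List.mem_of_mem_take
    exact (ne_top_of_le_ne_top h.top_ne_smul.symm (Submodule.smul_mono_left hle)).symm

end Modules

section ScalarTower

variable {A R M : Type*} [CommRing A] [CommRing R] [Algebra A R] [AddCommGroup M] [Module A M]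
  [Module R M] [IsScalarTower A R M]

theorem isRegular_map_algebraMap_iff (rs : List A) :
    IsRegular M (rs.map (algebraMap A R)) ↔ IsRegular M rs :=
  (AddEquiv.refl M).isRegular_congr <| List.forall₂_map_left_iff.mpr <|
    List.forall₂_same.mpr fun r _ ↦ algebraMap_smul R r

theorem finite_of_finite_quotient_annihilator [Module.Finite R M]
    [Module.Finite A (R ⧸ Module.annihilator R M)] : Module.Finite A M := by
  let : Module (R ⧸ Module.annihilator R M) M := Module.quotientAnnihilator
  have : IsScalarTower R (R ⧸ Module.annihilator R M) M :=
    (Module.isTorsionBySet_annihilator R M).isScalarTower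
  have : IsScalarTower A (R ⧸ Module.annihilator R M) M :=
    (Module.isTorsionBySet_annihilator R M).isScalarTower
  have : Module.Finite (R ⧸ Module.annihilator R M) M := .of_restrictScalars_finite R _ _
  exact Module.Finite.trans (R ⧸ Module.annihilator R M) M

theorem faithfulSMul_of_injective_quotient_annihilator
    (hinj : Function.Injective (algebraMap A (R ⧸ Module.annihilator R M))) :
    FaithfulSMul A M := by
  rw [← Module.annihilator_eq_bot, eq_bot_iff]
  intro a ha
  have hmem : algebraMap A R a ∈ Module.annihilator R M := by
    rw [Module.mem_annihilator] at ha ⊢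
    exact fun y ↦ (algebraMap_smul R a y).trans (ha y)
  exact hinj ((Ideal.Quotient.eq_zero_iff_mem.mpr hmem).trans (map_zero _).symm)

end ScalarTower

theorem nonempty_quotient_span_C_equiv {σ A S : Type*} [CommRing A] [CommRing S]
    (e : S ≃+* MvPolynomial σ A) (g : A) :
    Nonempty (S ⧸ Ideal.span {e.symm (MvPolynomial.C g)} ≃+*
      MvPolynomial σ (A ⧸ Ideal.span {g})) := by
  have hmap : Ideal.map MvPolynomial.C (Ideal.span {g}) =
      Ideal.map (e : S →+* MvPolynomial σ A) (Ideal.span {e.symm (MvPolynomial.C g)}) := by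
    simp [Ideal.map_span]
  exact ⟨(Ideal.quotientEquiv _ _ e hmap).trans
    (MvPolynomial.quotientEquivQuotientMvPolynomial (Ideal.span {g})).symm.toRingEquiv⟩

theorem exists_isMaximal_span_singleton_isSMulRegular {A S M : Type*} [CommRing A]
    [IsPrincipalIdealRing A] [CommRing S] [IsNoetherianRing S] [AddCommGroup M] [Module S M]
    [Module.Finite S M] (hA : {m : Ideal A | m.IsMaximal}.Infinite) (φ : A →+* S) :
    ∃ g : A, (Ideal.span {g}).IsMaximal ∧ IsSMulRegular M (φ g) := by
  have hproper : ∀ q ∈ Ideal.comap φ '' associatedPrimes S M, q ≠ ⊤ := by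
    rintro _ ⟨q, hq, rfl⟩
    exact Ideal.comap_ne_top φ hq.isPrime.ne_top
  obtain ⟨g, hmax, hg⟩ := exists_isMaximal_span_singleton_forall_notMem hA
    ((associatedPrimes.finite S M).image (Ideal.comap φ)) hproper
  exact ⟨g, hmax, isSMulRegular_of_forall_notMem_associatedPrimes
    fun q hq ↦ hg _ (Set.mem_image_of_mem _ hq)⟩

theorem exists_isRegular_length_eq_of_equiv_mvPolynomial {n : ℕ} {K S M : Type*} [Field K]
    [CommRing S] [AddCommGroup M] [Module S M] [Module.Finite S M] [FaithfulSMul S M]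
    (e : S ≃+* MvPolynomial (Fin n) K) : ∃ xs : List S, xs.length = n ∧ IsRegular M xs := by
  induction n generalizing K S M with
  | zero =>
    have : Nontrivial S := e.toEquiv.nontrivial
    have : Nontrivial M := nontrivial_of_faithfulSMul S M
    exact ⟨[], rfl, IsRegular.nil S M⟩
  | succ n ih =>
    let ePoly : S ≃+* MvPolynomial (Fin n) (Polynomial K) :=
      e.trans ((MvPolynomial.renameEquiv K (finSuccEquiv n)).trans
        (MvPolynomial.optionEquivRight K (Fin n))).toRingEquiv
    have : IsNoetherianRing S := isNoetherianRing_of_ringEquiv _ ePoly.symm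
    obtain ⟨g, hmax, hreg⟩ := exists_isMaximal_span_singleton_isSMulRegular (M := M)
      (infinite_setOfPred_isMaximal_of_isJacobsonRing (Polynomial.not_isField K))
      (ePoly.symm.toRingHom.comp MvPolynomial.C)
    set x : S := ePoly.symm (MvPolynomial.C g)
    let : Field (Polynomial K ⧸ Ideal.span {g}) := Ideal.Quotient.field _
    obtain ⟨eQuot⟩ := nonempty_quotient_span_C_equiv ePoly g
    have : (Ideal.span {x}).IsPrime :=
      (Ideal.Quotient.isDomain_iff_prime _).mp (eQuot.toMulEquiv.isDomain _)
    have : Module.Finite (S ⧸ Ideal.span {x}) (QuotSMulTop x M) :=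
      .of_restrictScalars_finite S _ _
    have : FaithfulSMul (S ⧸ Ideal.span {x}) (QuotSMulTop x M) :=
      faithfulSMul_quotient_quotSMulTop
    obtain ⟨ys, hlen, hys⟩ := ih (M := QuotSMulTop x M) eQuot
    obtain ⟨xs, rfl⟩ := List.map_surjective_iff.mpr Ideal.Quotient.mk_surjective ys
    exact ⟨x :: xs, by simpa using hlen, IsRegular.cons' hreg hys⟩

theorem exists_isRegular_length_eq_of_finite_of_injective {n : ℕ} {K R M : Type*} [Field K]
    [CommRing R] [AddCommGroup M] [Module R M] [Module.Finite R M]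
    [Algebra (MvPolynomial (Fin n) K) R]
    [Module.Finite (MvPolynomial (Fin n) K) (R ⧸ Module.annihilator R M)]
    (hinj : Function.Injective
      (algebraMap (MvPolynomial (Fin n) K) (R ⧸ Module.annihilator R M))) :
    ∃ xs : List R, xs.length = n ∧ IsRegular M xs := by
  let : Module (MvPolynomial (Fin n) K) M := Module.compHom M (algebraMap _ R)
  have : IsScalarTower (MvPolynomial (Fin n) K) R M := .of_algebraMap_smul fun _ _ ↦ rfl
  have : Module.Finite (MvPolynomial (Fin n) K) M :=
    finite_of_finite_quotient_annihilator (R := R)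
  have : FaithfulSMul (MvPolynomial (Fin n) K) M :=
    faithfulSMul_of_injective_quotient_annihilator hinj
  obtain ⟨xs, hlen, hreg⟩ :=
    exists_isRegular_length_eq_of_equiv_mvPolynomial (M := M) (.refl (MvPolynomial (Fin n) K))
  exact ⟨xs.map (algebraMap _ R), by rw [List.length_map, hlen],
    (isRegular_map_algebraMap_iff xs).mpr hreg⟩

theorem exists_algHom_injective_finite_quotient (k : Type*) {R : Type*} [Field k] [CommRing R]
    [Algebra k R] [Algebra.FiniteType k R] {I : Ideal R} (hI : I ≠ ⊤) :
    ∃ (s : ℕ) (φ : MvPolynomial (Fin s) k →ₐ[k] R),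
      Function.Injective ((Ideal.Quotient.mkₐ k I).comp φ) ∧
        ((Ideal.Quotient.mkₐ k I).comp φ).Finite := by
  have : Nontrivial (R ⧸ I) := Ideal.Quotient.nontrivial_iff.mpr hI
  obtain ⟨s, g, hinj, hfin⟩ := exists_finite_inj_algHom_of_fg k (R ⧸ I)
  choose x hx using fun i ↦ Ideal.Quotient.mkₐ_surjective k I (g (MvPolynomial.X i))
  have hlift : (Ideal.Quotient.mkₐ k I).comp (MvPolynomial.aeval x) = g :=
    MvPolynomial.algHom_ext fun i ↦ by
      rw [AlgHom.comp_apply, MvPolynomial.aeval_X, hx]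
  exact ⟨s, MvPolynomial.aeval x, hlift ▸ hinj, hlift ▸ hfin⟩

/-- Let `R` be an algebra of finite type over a field `k` and let `M` be a
finitely generated `R`-module of Krull dimension `c ≥ 0`. Then there exists an `M`-regular
sequence of elements of `R` of length `c`. -/
theorem exists_regular_sequence_of_length_krullDim
    (k R M : Type*) [Field k] [CommRing R] [Algebra k R] [Algebra.FiniteType k R]
    [AddCommGroup M] [Module R M] [Module.Finite R M]
    (c : ℕ) (hdim : ringKrullDim (R ⧸ Module.annihilator R M) = c) :
    ∃ xs : List R, xs.length = c ∧ RingTheory.Sequence.IsRegular M xs := by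
  have hne : Module.annihilator R M ≠ ⊤ := by
    intro htop
    have := Ideal.Quotient.subsingleton_iff.mpr htop
    exact WithBot.bot_ne_coe (ringKrullDim_eq_bot_of_subsingleton.symm.trans hdim)
  obtain ⟨s, φ, hinj, hfin⟩ := exists_algHom_injective_finite_quotient k hne
  let : Algebra (MvPolynomial (Fin s) k) R := φ.toRingHom.toAlgebra
  have : Module.Finite (MvPolynomial (Fin s) k) (R ⧸ Module.annihilator R M) := hfin
  have hcs : c ≤ s := by
    have hle := ringKrullDim_le_card_of_isIntegral_mvPolynomial (Fin s) k
      (R ⧸ Module.annihilator R M)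
    rw [hdim, Nat.card_fin] at hle
    exact_mod_cast hle
  obtain ⟨xs, hlen, hreg⟩ := exists_isRegular_length_eq_of_finite_of_injective (M := M) hinj
  exact ⟨xs.take c, by rw [List.length_take, hlen, min_eq_left hcs], isRegular_take hreg c⟩
end
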